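/- arXiv:1603.02319 — 2 statements merged into one kernel-verified Lean document; each statement's English description precedes it below -/
import Mathlib

section
/- Let f:(ℝ,0)→(ℝ^{2n},0) be a quasi-homogeneous curve-germ, i.e. A-equivalent to a monomial curve t↦(t^{μ_1},…,t^{μ_k},0,…,0) for some positive integers μ_1<…<μ_k linearly independent over non-negative integers. Let ω_0 and ω_1 be germs of symplectic forms on ℝ^{2n} (smooth 2-forms defined near 0, closed near 0, and pointwise non-degenerate near 0) that have the same algebraic restriction to f. Then there exists a germ of diffeomorphism Φ:(ℝ^{2n},0)→(ℝ^{2n},0) such that Φ∘f = f on a neighbourhood of 0 in ℝ and Φ^*ω_1 = ω_0 on a neighbourhood of 0 in ℝ^{2n}. -/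
open Filter Topology

noncomputable section

/-- A (set-theoretic) differential 1-form on `ℝ^m`: a map assigning to each point a
function on tangent vectors. -/
def Form1 (m : ℕ) := (Fin m → ℝ) → (Fin m → ℝ) → ℝ

/-- A (set-theoretic) differential 2-form on `ℝ^m`. -/
def Form2 (m : ℕ) := (Fin m → ℝ) → (Fin m → ℝ) → (Fin m → ℝ) → ℝ

/-- A germ at `0` of a smooth differential 1-form: pointwise linear in the tangent
vector, and with coefficients smooth on a neighbourhood of `0`. -/
def IsForm1 (m : ℕ) (β : Form1 m) : Prop :=
  (∀ x u₁ u₂ (c : ℝ), β x (u₁ + c • u₂) = β x u₁ + c * β x u₂) ∧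
  (∀ u, ∃ U ∈ 𝓝 (0 : Fin m → ℝ), ContDiffOn ℝ (⊤ : ℕ∞) (fun x => β x u) U)

/-- A germ at `0` of a smooth differential 2-form: pointwise bilinear and alternating
in the tangent vectors, with coefficients smooth on a neighbourhood of `0`. -/
def IsForm2 (m : ℕ) (ω : Form2 m) : Prop :=
  (∀ x u₁ u₂ v (c : ℝ), ω x (u₁ + c • u₂) v = ω x u₁ v + c * ω x u₂ v) ∧
  (∀ x u v, ω x u v = - ω x v u) ∧
  (∀ u v, ∃ U ∈ 𝓝 (0 : Fin m → ℝ), ContDiffOn ℝ (⊤ : ℕ∞) (fun x => ω x u v) U)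

/-- The exterior derivative of a 1-form, evaluated on a pair of (constant) vectors. -/
def extD1 (m : ℕ) (β : Form1 m) : Form2 m :=
  fun x u v => fderiv ℝ (fun y => β y v) x u - fderiv ℝ (fun y => β y u) x v

/-- The exterior derivative of a 2-form, evaluated on a triple of (constant) vectors. -/
def extD2 (m : ℕ) (ω : Form2 m) (x u v w : Fin m → ℝ) : ℝ :=
  fderiv ℝ (fun y => ω y v w) x u - fderiv ℝ (fun y => ω y u w) x v
    + fderiv ℝ (fun y => ω y u v) x w

/-- A 2-form is closed near `0` if its exterior derivative vanishes near `0`. -/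
def Closed2 (m : ℕ) (ω : Form2 m) : Prop :=
  ∀ᶠ x in 𝓝 (0 : Fin m → ℝ), ∀ u v w, extD2 m ω x u v w = 0

/-- A 1-form vanishes on the image of a curve-germ. -/
def VanishesOn1 (m : ℕ) (β : Form1 m) (f : ℝ → (Fin m → ℝ)) : Prop :=
  ∀ᶠ t in 𝓝 (0 : ℝ), ∀ u, β (f t) u = 0

/-- A 2-form vanishes on the image of a curve-germ. -/
def VanishesOn2 (m : ℕ) (ω : Form2 m) (f : ℝ → (Fin m → ℝ)) : Prop :=
  ∀ᶠ t in 𝓝 (0 : ℝ), ∀ u v, ω (f t) u v = 0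

/-- A 2-form `ω` has zero algebraic restriction to the curve-germ `f` if `ω = α + dβ`
near `0` for a smooth 2-form `α` and a smooth 1-form `β` both vanishing on `im f`. -/
def ZeroAR2 (m : ℕ) (ω : Form2 m) (f : ℝ → (Fin m → ℝ)) : Prop :=
  ∃ (α : Form2 m) (β : Form1 m), IsForm2 m α ∧ IsForm1 m β ∧
    VanishesOn2 m α f ∧ VanishesOn1 m β f ∧
    ∀ᶠ x in 𝓝 (0 : Fin m → ℝ), ∀ u v, ω x u v = α x u v + extD1 m β x u v

/-- Two 2-forms have the same algebraic restriction to `f` if their difference has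
zero algebraic restriction to `f`. -/
def SameAR2 (m : ℕ) (ω₁ ω₂ : Form2 m) (f : ℝ → (Fin m → ℝ)) : Prop :=
  ZeroAR2 m (fun x u v => ω₁ x u v - ω₂ x u v) f

/-- The pullback of a 2-form by a (germ of) smooth map. -/
def pull2 (m : ℕ) (Φ : (Fin m → ℝ) → (Fin m → ℝ)) (ω : Form2 m) : Form2 m :=
  fun x u v => ω (Φ x) (fderiv ℝ Φ x u) (fderiv ℝ Φ x v)

/-- A germ of diffeomorphism of `(ℝ,0)`. -/
def IsDiffeoGerm1 (φ : ℝ → ℝ) : Prop :=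
  φ 0 = 0 ∧ (∃ U ∈ 𝓝 (0 : ℝ), ContDiffOn ℝ (⊤ : ℕ∞) φ U) ∧ deriv φ 0 ≠ 0

/-- A germ of diffeomorphism of `(ℝ^m,0)`. -/
def IsDiffeoGerm (m : ℕ) (Φ : (Fin m → ℝ) → (Fin m → ℝ)) : Prop :=
  Φ 0 = 0 ∧ (∃ U ∈ 𝓝 (0 : Fin m → ℝ), ContDiffOn ℝ (⊤ : ℕ∞) Φ U) ∧
    ∃ D : (Fin m → ℝ) ≃L[ℝ] (Fin m → ℝ),
      HasFDerivAt Φ (D : (Fin m → ℝ) →L[ℝ] (Fin m → ℝ)) 0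

/-- The constant 2-form `dxᵢ ∧ dxⱼ` on `ℝ^m` (indices `0`-based). -/
def wedge (m : ℕ) (i j : Fin m) : Form2 m := fun _ u v => u i * v j - u j * v i

/-- The 2-form `x_l · dxᵢ ∧ dxⱼ` on `ℝ^m` (indices `0`-based). -/
def mwedge (m : ℕ) (l i j : Fin m) : Form2 m :=
  fun x u v => x l * (u i * v j - u j * v i)

/-- A curve-germ: a `C^∞` map from a neighbourhood of `0` in `ℝ` to `ℝ^m` sending `0` to `0`. -/
def IsCurveGerm (m : ℕ) (f : ℝ → (Fin m → ℝ)) : Prop :=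
  f 0 = 0 ∧ ∃ U ∈ 𝓝 (0 : ℝ), ContDiffOn ℝ (⊤ : ℕ∞) f U

/-- `A`-equivalence of curve-germs. -/
def AEquiv (m : ℕ) (f g : ℝ → (Fin m → ℝ)) : Prop :=
  ∃ φ Φ, IsDiffeoGerm1 φ ∧ IsDiffeoGerm m Φ ∧ ∀ᶠ t in 𝓝 (0 : ℝ), Φ (f t) = g (φ t)

/-- Positive integers `μ 0, …, μ (k-1)` are linearly independent over non-negative
integers: no `μ j` is a `ℕ`-linear combination of the others. -/
def LinIndepNonneg {k : ℕ} (μ : Fin k → ℕ) : Prop :=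
  ∀ j : Fin k, ∀ c : Fin k → ℕ, μ j ≠ ∑ i ∈ Finset.univ.erase j, c i * μ i

/-- A quasi-homogeneous curve-germ: one `A`-equivalent to a monomial curve
`t ↦ (t^{μ₁},…,t^{μ_k},0,…,0)` with `μ₁ < … < μ_k` positive and linearly independent
over non-negative integers. -/
def IsQuasiHomogeneousCurve (m : ℕ) (f : ℝ → (Fin m → ℝ)) : Prop :=
  ∃ k : ℕ, 1 ≤ k ∧ k ≤ m ∧ ∃ μ : Fin k → ℕ,
    StrictMono μ ∧ (∀ i, 0 < μ i) ∧ LinIndepNonneg μ ∧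
    AEquiv m f (fun t i => if h : (i : ℕ) < k then t ^ μ ⟨i, h⟩ else 0)

/-- A germ of symplectic form on `ℝ^m`: a smooth 2-form, closed near `0`, and
pointwise non-degenerate near `0`. -/
def IsSymplecticGerm (m : ℕ) (ω : Form2 m) : Prop :=
  IsForm2 m ω ∧ Closed2 m ω ∧
    ∀ᶠ x in 𝓝 (0 : Fin m → ℝ), ∀ u, (∀ v, ω x u v = 0) → u = 0

/-!
A diffeomorphism germ carries `f` to a monomial curve `γ` along linearly independent vectors, which
span a subspace `W`. The weighted dilations contract the image of `γ` into itself, so the homotopy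
operator gives a relative Poincaré lemma: a closed form vanishing on the image is `d` of a form
vanishing there. Hence `ω₀ - ω₁ = dβ` for some `β` vanishing on the image.

Comparing Taylor coefficients along `γ`, the independence of the exponents forces a function
vanishing on the image to have zero differential along `W`. Therefore `ω₀` and `ω₁` agree on `W` at
the origin, and by Witt's theorem some linear map fixing `W` pointwise makes them agree on the whole
tangent space there. Subtracting from `β` its linear part, a closed form vanishing on `W`, makes `β`
flat to first order. Moser's vector field then vanishes on the image and to first order at the
origin, so its flow up to time `1` fixes the curve and carries one form to the other.
-/

open Set
open scoped ContDiff unitInterval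

universe u

section Superposition

variable {K E F : Type*} [TopologicalSpace K] [CompactSpace K]
  [NormedAddCommGroup E] [NormedSpace ℝ E] [NormedAddCommGroup F] [NormedSpace ℝ F]

/-- Pointwise evaluation of a continuous family of operators on a continuous family of vectors,
as a continuous bilinear map. -/
def pointwiseApply (K E F : Type*) [TopologicalSpace K] [CompactSpace K]
    [NormedAddCommGroup E] [NormedSpace ℝ E] [NormedAddCommGroup F] [NormedSpace ℝ F] :
    C(K, E →L[ℝ] F) →L[ℝ] C(K, E) →L[ℝ] C(K, F) :=
  LinearMap.mkContinuous₂
    (LinearMap.mk₂ ℝ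
      (fun (A : C(K, E →L[ℝ] F)) (c : C(K, E)) ↦ (⟨fun t ↦ A t (c t), by fun_prop⟩ : C(K, F)))
      (by intros; ext; simp) (by intros; ext; simp) (by intros; ext; simp)
      (by intros; ext; simp)) 1 fun A c ↦ by
    rw [ContinuousMap.norm_le _ (by positivity), one_mul]
    exact fun t ↦ (A t).le_of_opNorm_le_of_le (A.norm_coe_le_norm t) (c.norm_coe_le_norm t)

@[simp]
theorem pointwiseApply_apply (A : C(K, E →L[ℝ] F)) (c : C(K, E)) (t : K) :
    pointwiseApply K E F A c t = A t (c t) := rfl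

theorem hasFDerivAt_continuousMap_comp (g : C(E, F)) (g' : C(E, E →L[ℝ] F))
    (hg : ∀ x, HasFDerivAt g (g' x) x) (c : C(K, E)) :
    HasFDerivAt (fun c : C(K, E) ↦ g.comp c) (pointwiseApply K E F (g'.comp c)) c := by
  rw [hasFDerivAt_iff_isLittleO_nhds_zero, Asymptotics.isLittleO_iff]
  intro ε hε
  obtain ⟨δ, hδ, hg'⟩ : ∃ δ > 0, ∀ ⦃d : C(K, E)⦄, dist d c < δ → dist (g'.comp d) (g'.comp c) < ε :=
    Metric.continuousAt_iff.1 (ContinuousMap.continuous_postcomp g').continuousAt ε hε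
  filter_upwards [Metric.ball_mem_nhds (0 : C(K, E)) hδ] with h hh
  rw [mem_ball_zero_iff] at hh
  rw [ContinuousMap.norm_le _ (by positivity)]
  intro t
  have hsegment : ∀ x ∈ segment ℝ (c t) (c t + h t), ‖g' x - g' (c t)‖ ≤ ε := by
    rw [segment_eq_image']
    rintro _ ⟨θ, ⟨hθ₀, hθ₁⟩, rfl⟩
    have hclose : dist (c + θ • h) c < δ := by
      rw [dist_eq_norm, add_sub_cancel_left, norm_smul, Real.norm_of_nonneg hθ₀]
      exact (mul_le_of_le_one_left (norm_nonneg h) hθ₁).trans_lt hh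
    have := (ContinuousMap.dist_apply_le_dist t).trans (hg' hclose).le
    simpa [dist_eq_norm] using this
  have hmean := (convex_segment (c t) (c t + h t)).norm_image_sub_le_of_norm_hasFDerivWithin_le'
    (fun x _ ↦ (hg x).hasFDerivWithinAt) hsegment
    (left_mem_segment ℝ _ _) (right_mem_segment ℝ _ _)
  rw [add_sub_cancel_left] at hmean
  exact hmean.trans (by gcongr; exact h.norm_coe_le_norm t)

theorem contDiff_continuousMap_comp {E F : Type u} [NormedAddCommGroup E] [NormedSpace ℝ E]
    [NormedAddCommGroup F] [NormedSpace ℝ F] (g : C(E, F)) (hg : ContDiff ℝ ∞ g) :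
    ContDiff ℝ ∞ fun c : C(K, E) ↦ g.comp c := by
  refine contDiff_infty.2 fun n ↦ ?_
  induction n generalizing F with
  | zero => exact contDiff_zero.2 (ContinuousMap.continuous_postcomp g)
  | succ n ih =>
    have hg' : ContDiff ℝ ∞ (fderiv ℝ g) := hg.fderiv_right (by norm_cast)
    rw [Nat.cast_add_one, contDiff_succ_iff_hasFDerivAt]
    exact ⟨_, (pointwiseApply K E F).contDiff.comp (ih ⟨fderiv ℝ g, hg'.continuous⟩ hg'),
      hasFDerivAt_continuousMap_comp g _
        fun x ↦ (hg.differentiable (by simp) x).hasFDerivAt⟩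

end Superposition

section LocalInverse

variable {E F : Type*} [NormedAddCommGroup E] [NormedSpace ℝ E] [NormedAddCommGroup F]
  [NormedSpace ℝ F]

theorem exists_smooth_localInverse [CompleteSpace E] {f : E → F} {a : E} {f' : E ≃L[ℝ] F}
    (hf : ∀ᶠ x in 𝓝 a, ContDiffAt ℝ ∞ f x) (hf' : HasFDerivAt f (f' : E →L[ℝ] F) a) :
    ∃ g : F → E, g (f a) = a ∧ (∀ᶠ y in 𝓝 (f a), ContDiffAt ℝ ∞ g y) ∧
      (∀ᶠ y in 𝓝 (f a), f (g y) = y) ∧ ∀ᶠ x in 𝓝 a, g (f x) = x := by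
  have ha : ContDiffAt ℝ ∞ f a := hf.self_of_nhds
  let e := ha.toOpenPartialHomeomorph f hf' (by simp)
  have hsource : a ∈ e.source := ha.mem_toOpenPartialHomeomorph_source hf' (by simp)
  have htarget : f a ∈ e.target := ha.image_mem_toOpenPartialHomeomorph_target hf' (by simp)
  have hea : e.symm (f a) = a := e.left_inv hsource
  have hsymm : Tendsto e.symm (𝓝 (f a)) (𝓝 a) := by
    simpa only [ContinuousAt, hea] using e.symm.continuousAt (x := f a) htarget
  have hequiv : ∀ᶠ x in 𝓝 a, fderiv ℝ f x ∈ range ((↑) : (E ≃L[ℝ] F) → E →L[ℝ] F) :=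
    (ha.fderiv_right (m := 0) (by norm_cast)).continuousAt.eventually_mem
      (hf'.fderiv ▸ ContinuousLinearEquiv.nhds f')
  refine ⟨e.symm, hea, ?_, mem_of_superset (e.open_target.mem_nhds htarget) fun _ ↦ e.right_inv,
    mem_of_superset (e.open_source.mem_nhds hsource) fun _ ↦ e.left_inv⟩
  filter_upwards [hsymm.eventually hf, hsymm.eventually hequiv, e.open_target.mem_nhds htarget]
    with y hy ⟨f'y, hf'y⟩ hy'
  exact e.contDiffAt_symm hy' (f₀' := f'y)
    (hf'y ▸ (hy.differentiableAt (by simp)).hasFDerivAt) hy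

theorem exists_contDiff_eventuallyEq [FiniteDimensional ℝ E] {f : E → F} {a : E}
    (hf : ∀ᶠ x in 𝓝 a, ContDiffAt ℝ ∞ f x) : ∃ g : E → F, ContDiff ℝ ∞ g ∧ g =ᶠ[𝓝 a] f := by
  obtain ⟨ε, hε, hball⟩ := Metric.eventually_nhds_iff_ball.1 hf
  let χ : ContDiffBump a := ⟨ε / 4, ε / 2, by positivity, by linarith⟩
  refine ⟨fun x ↦ χ x • f x, contDiff_iff_contDiffAt.2 fun x ↦ ?_, ?_⟩
  · by_cases hx : x ∈ Metric.ball a ε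
    · exact χ.contDiff.contDiffAt.smul (hball x hx)
    · have hsupport : x ∉ tsupport χ := by
        rw [χ.tsupport_eq]
        exact fun h ↦ hx (Metric.closedBall_subset_ball (half_lt_self hε) h)
      refine (contDiffAt_const (c := (0 : F))).congr_of_eventuallyEq ?_
      filter_upwards [notMem_tsupport_iff_eventuallyEq.1 hsupport] with y hy
      simp [hy]
  · filter_upwards [χ.eventuallyEq_one] with x hx
    simp [hx]

end LocalInverse

section CurveOperators

/-- The constant curves, as a continuous linear map. -/
def constCurve (E : Type*) [NormedAddCommGroup E] [NormedSpace ℝ E] : E →L[ℝ] C(I, E) where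
  toFun := ContinuousMap.const I
  map_add' _ _ := rfl
  map_smul' _ _ := rfl
  cont := ContinuousMap.continuous_const'

/-- The primitive `τ ↦ ∫₀^τ c` of a curve `c` on the unit interval, as a continuous linear map. -/
def primitiveCurve (E : Type*) [NormedAddCommGroup E] [NormedSpace ℝ E] :
    C(I, E) →L[ℝ] C(I, E) :=
  LinearMap.mkContinuous
    { toFun c := ⟨fun τ ↦ ∫ s in (0 : ℝ)..τ, IccExtend zero_le_one c s,
        (intervalIntegral.continuous_primitive
          (fun _ _ ↦ c.continuous.Icc_extend'.intervalIntegrable _ _) 0).comp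
            continuous_subtype_val⟩
      map_add' c d := by
        ext τ
        exact intervalIntegral.integral_add (c.continuous.Icc_extend'.intervalIntegrable _ _)
          (d.continuous.Icc_extend'.intervalIntegrable _ _)
      map_smul' r c := by
        ext τ
        exact intervalIntegral.integral_smul r _ }
    1 fun c ↦ by
      rw [ContinuousMap.norm_le _ (by positivity), one_mul]
      intro τ
      refine (intervalIntegral.norm_integral_le_of_norm_le_const
        fun _ _ ↦ c.norm_coe_le_norm _).trans ?_
      rw [sub_zero, abs_of_nonneg τ.2.1]
      exact mul_le_of_le_one_right (norm_nonneg c) τ.2.2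

variable {E F : Type u} [NormedAddCommGroup E] [NormedSpace ℝ E] [NormedAddCommGroup F]
  [NormedSpace ℝ F]

@[simp]
theorem constCurve_apply (x : E) (τ : I) : constCurve E x τ = x := rfl

theorem primitiveCurve_apply (c : C(I, E)) (τ : I) :
    primitiveCurve E c τ = ∫ s in (0 : ℝ)..τ, IccExtend zero_le_one c s := rfl

@[simp]
theorem primitiveCurve_apply_zero (c : C(I, E)) : primitiveCurve E c 0 = 0 := by
  simp [primitiveCurve_apply]

theorem hasDerivWithinAt_of_eq_constCurve_add_primitiveCurve [CompleteSpace E] {b c : C(I, E)}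
    {x : E} (h : c = constCurve E x + primitiveCurve E b) {τ : ℝ} (hτ : τ ∈ I) :
    HasDerivWithinAt (IccExtend zero_le_one c) (b ⟨τ, hτ⟩) I τ := by
  have hint : HasDerivAt (fun τ ↦ x + ∫ s in (0 : ℝ)..τ, IccExtend zero_le_one b s)
      (b ⟨τ, hτ⟩) τ := by
    have := (b.continuous.Icc_extend' (h := zero_le_one)).integral_hasStrictDerivAt 0 τ
    rw [IccExtend_of_mem _ _ hτ] at this
    exact this.hasDerivAt.const_add x
  have heq : ∀ s ∈ I, IccExtend zero_le_one c s =
      x + ∫ r in (0 : ℝ)..s, IccExtend zero_le_one b r := by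
    intro s hs
    rw [IccExtend_of_mem _ _ hs, h]
    rfl
  exact hint.hasDerivWithinAt.congr heq (heq τ hτ)

/-- The superposition operator `c ↦ (τ ↦ X (τ, c τ))` of a smooth time-dependent map `X`. -/
def superposition (X : ℝ × E → F) (hX : ContDiff ℝ ∞ X) (c : C(I, E)) : C(I, F) :=
  ⟨fun τ ↦ X (τ, c τ), hX.continuous.comp (by fun_prop)⟩

variable {X : ℝ × E → F} (hX : ContDiff ℝ ∞ X)
include hX

@[simp]
theorem superposition_apply (c : C(I, E)) (τ : I) : superposition X hX c τ = X (τ, c τ) := rfl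

theorem superposition_eq_comp (c : C(I, E)) :
    superposition X hX c = (⟨X, hX.continuous⟩ : C(ℝ × E, F)).comp
      (⟨fun τ ↦ (τ, 0), by fun_prop⟩ +
        (ContinuousLinearMap.inr ℝ ℝ E).compLeftContinuous ℝ I c) := by
  ext τ
  simp

theorem contDiff_superposition : ContDiff ℝ ∞ (superposition X hX) := by
  rw [funext (superposition_eq_comp hX)]
  exact (contDiff_continuousMap_comp _ hX).comp
    (contDiff_const.add (ContinuousLinearMap.contDiff _))

theorem fderiv_superposition_apply (c d : C(I, E)) (τ : I) :
    fderiv ℝ (superposition X hX) c d τ = fderiv ℝ X (τ, c τ) (0, d τ) := by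
  have hcomp := (hasFDerivAt_continuousMap_comp ⟨X, hX.continuous⟩
    ⟨fderiv ℝ X, hX.continuous_fderiv (by simp)⟩
    (fun p ↦ (hX.differentiable (by simp) p).hasFDerivAt) _).comp c
      (((ContinuousLinearMap.inr ℝ ℝ E).compLeftContinuous ℝ I).hasFDerivAt.const_add
        ⟨fun τ ↦ ((τ : ℝ), (0 : E)), by fun_prop⟩)
  have hsup : HasFDerivAt (superposition X hX) _ c :=
    hcomp.congr_of_eventuallyEq (.of_forall (superposition_eq_comp hX))
  rw [hsup.fderiv]
  simp

theorem intervalIntegral_eq_primitiveCurve (x : E) :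
    ∫ s in (0 : ℝ)..1, X (s, x) =
      primitiveCurve F (superposition X hX (constCurve E x)) 1 := by
  rw [primitiveCurve_apply]
  refine intervalIntegral.integral_congr fun s hs ↦ ?_
  rw [uIcc_of_le zero_le_one] at hs
  simp [IccExtend_of_mem _ _ hs]

theorem contDiff_intervalIntegral : ContDiff ℝ ∞ fun x ↦ ∫ s in (0 : ℝ)..1, X (s, x) := by
  simp only [intervalIntegral_eq_primitiveCurve hX]
  exact ((ContinuousMap.evalCLM ℝ 1).comp (primitiveCurve F)).contDiff.comp
    ((contDiff_superposition hX).comp (constCurve E).contDiff)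

theorem fderiv_intervalIntegral_apply (x u : E) :
    fderiv ℝ (fun x ↦ ∫ s in (0 : ℝ)..1, X (s, x)) x u =
      ∫ s in (0 : ℝ)..1, fderiv ℝ X (s, x) (0, u) := by
  have hsup := ((contDiff_superposition hX).differentiable (by simp)
    (constCurve E x)).hasFDerivAt.comp x (constCurve E).hasFDerivAt
  have hint : HasFDerivAt (fun x ↦ ∫ s in (0 : ℝ)..1, X (s, x)) _ x :=
    (((ContinuousMap.evalCLM ℝ 1).comp (primitiveCurve F)).hasFDerivAt.comp x
      hsup).congr_of_eventuallyEq (.of_forall (intervalIntegral_eq_primitiveCurve hX))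
  rw [hint.fderiv]
  change primitiveCurve F _ 1 = _
  rw [primitiveCurve_apply, Icc.coe_one]
  refine intervalIntegral.integral_congr fun s hs ↦ ?_
  rw [uIcc_of_le zero_le_one] at hs
  simp [IccExtend_of_mem _ _ hs, fderiv_superposition_apply]

end CurveOperators

section Flow

/-- `Φ` is a germ at `0` of the flow, for times in `[0, 1]`, of the time-dependent vector field `X`.
The evolution of `fderiv ℝ (Φ τ)` is the linearised equation. -/
structure IsFlowGerm {E : Type*} [NormedAddCommGroup E] [NormedSpace ℝ E] (X : ℝ × E → E)
    (Φ : ℝ → E → E) : Prop where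
  zero_apply : ∀ᶠ x in 𝓝 0, Φ 0 x = x
  eventually_forall_mem : ∀ U ∈ 𝓝 (0 : E), ∀ᶠ x in 𝓝 0, ∀ τ ∈ I, Φ τ x ∈ U
  contDiffAt : ∀ᶠ x in 𝓝 0, ∀ τ, ContDiffAt ℝ ∞ (Φ τ) x
  hasDerivWithinAt : ∀ᶠ x in 𝓝 0, ∀ τ ∈ I,
    HasDerivWithinAt (fun τ ↦ Φ τ x) (X (τ, Φ τ x)) I τ
  hasDerivWithinAt_fderiv : ∀ᶠ x in 𝓝 0, ∀ u, ∀ τ ∈ I,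
    HasDerivWithinAt (fun τ ↦ fderiv ℝ (Φ τ) x u)
      (fderiv ℝ X (τ, Φ τ x) (0, fderiv ℝ (Φ τ) x u)) I τ
  apply_eq_self : ∀ᶠ x in 𝓝 0, (∀ τ ∈ I, X (τ, x) = 0) → ∀ τ, Φ τ x = x

variable {E : Type u} [NormedAddCommGroup E] [NormedSpace ℝ E] {X : ℝ × E → E}

theorem fderiv_solution_integralEquation (hX : ContDiff ℝ ∞ X) {γ : E → C(I, E)} {x : E}
    (hγ : DifferentiableAt ℝ γ x)
    (heq : ∀ᶠ y in 𝓝 x, γ y = constCurve E y + primitiveCurve E (superposition X hX (γ y)))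
    (u : E) :
    fderiv ℝ γ x u = constCurve E u +
      primitiveCurve E (fderiv ℝ (superposition X hX) (γ x) (fderiv ℝ γ x u)) := by
  have hrhs := (constCurve E).hasFDerivAt.add ((primitiveCurve E).hasFDerivAt.comp x
    (((contDiff_superposition hX).differentiable (by simp) (γ x)).hasFDerivAt.comp x
      hγ.hasFDerivAt))
  exact DFunLike.congr_fun (hrhs.congr_of_eventuallyEq heq).fderiv u

variable [CompleteSpace E]

-- `T c = c - ∫ X (s, c s) ds` has differential `id` at the zero curve, and `c` solves the integral
-- equation with initial value `x` iff `T c` is the constant curve `x`; so `γ` is read off from a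
-- local inverse of `T`.
theorem exists_solution_integralEquation (hX : ContDiff ℝ ∞ X) (hX₀ : ∀ τ, X (τ, 0) = 0)
    (hX₀' : ∀ τ u, fderiv ℝ X (τ, 0) (0, u) = 0) :
    ∃ γ : E → C(I, E), γ 0 = 0 ∧ (∀ᶠ x in 𝓝 0, ContDiffAt ℝ ∞ γ x) ∧
      (∀ᶠ x in 𝓝 0, γ x = constCurve E x + primitiveCurve E (superposition X hX (γ x))) ∧
      ∀ᶠ x in 𝓝 0, (∀ τ ∈ I, X (τ, x) = 0) → γ x = constCurve E x := by
  set N := superposition X hX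
  have hN : ContDiff ℝ ∞ N := contDiff_superposition hX
  have hN₀ : N 0 = 0 := by ext τ; simpa [N] using hX₀ τ
  have hN₀' : fderiv ℝ N 0 = 0 := by
    ext d τ
    simpa [N, fderiv_superposition_apply] using hX₀' τ (d τ)
  let T : C(I, E) → C(I, E) := fun c ↦ c - primitiveCurve E (N c)
  have hT : ContDiff ℝ ∞ T := contDiff_id.sub ((primitiveCurve E).contDiff.comp hN)
  have hT₀ : T 0 = 0 := by simp [T, hN₀]
  have hT₀' : HasFDerivAt T
      (ContinuousLinearEquiv.refl ℝ C(I, E) : C(I, E) →L[ℝ] C(I, E)) 0 := by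
    have : HasFDerivAt T _ 0 := (hasFDerivAt_id 0).sub ((primitiveCurve E).hasFDerivAt.comp 0
      (hN.differentiable (by simp) 0).hasFDerivAt)
    rwa [hN₀', ContinuousLinearMap.comp_zero, sub_zero] at this
  obtain ⟨S, hS₀, hS, hTS, hST⟩ :=
    exists_smooth_localInverse (.of_forall fun c ↦ hT.contDiffAt) hT₀'
  rw [hT₀] at hS₀ hS hTS
  have hconst : Tendsto (constCurve E) (𝓝 0) (𝓝 0) :=
    (constCurve E).continuous.tendsto' _ _ (map_zero _)
  refine ⟨fun x ↦ S (constCurve E x), by simpa using hS₀, ?_, ?_, ?_⟩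
  · filter_upwards [hconst.eventually hS] with x hx
    exact hx.comp x (constCurve E).contDiff.contDiffAt
  · filter_upwards [hconst.eventually hTS] with x hx
    exact eq_add_of_sub_eq hx
  · filter_upwards [hconst.eventually hST] with x hx hfixed
    have : N (constCurve E x) = 0 := by ext τ; simpa [N] using hfixed τ τ.2
    simpa [T, this] using hx

theorem exists_isFlowGerm (hX : ContDiff ℝ ∞ X) (hX₀ : ∀ τ, X (τ, 0) = 0)
    (hX₀' : ∀ τ u, fderiv ℝ X (τ, 0) (0, u) = 0) : ∃ Φ, IsFlowGerm X Φ := by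
  obtain ⟨γ, hγ₀, hγ, heq, hfixed⟩ := exists_solution_integralEquation hX hX₀ hX₀'
  have hfderiv : ∀ x, DifferentiableAt ℝ γ x → ∀ τ u,
      fderiv ℝ (fun x ↦ IccExtend zero_le_one (γ x) τ) x u =
        IccExtend zero_le_one (fderiv ℝ γ x u) τ := by
    intro x hx τ u
    let ev : C(I, E) →L[ℝ] E := ContinuousMap.evalCLM ℝ (projIcc 0 1 zero_le_one τ)
    exact DFunLike.congr_fun (ev.hasFDerivAt.comp x hx.hasFDerivAt).fderiv u
  refine ⟨fun τ x ↦ IccExtend zero_le_one (γ x) τ, ?_, ?_, ?_, ?_, ?_, ?_⟩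
  · filter_upwards [heq] with x hx
    rw [hx]
    simp
  · intro U hU
    obtain ⟨ε, hε, hεU⟩ := Metric.mem_nhds_iff.1 hU
    have hlim : Tendsto γ (𝓝 0) (𝓝 0) := by
      simpa only [hγ₀] using hγ.self_of_nhds.continuousAt.tendsto
    filter_upwards [hlim (Metric.ball_mem_nhds _ hε)] with x hx τ _
    rw [mem_preimage, mem_ball_zero_iff] at hx
    exact hεU (mem_ball_zero_iff.2 (((γ x).norm_coe_le_norm _).trans_lt hx))
  · filter_upwards [hγ] with x hx τ
    exact (ContinuousMap.evalCLM ℝ (projIcc 0 1 zero_le_one τ)).contDiff.contDiffAt.comp x hx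
  · filter_upwards [heq] with x hx τ hτ
    have := hasDerivWithinAt_of_eq_constCurve_add_primitiveCurve hx hτ
    rwa [superposition_apply, ← IccExtend_of_mem zero_le_one (γ x) hτ] at this
  · filter_upwards [hγ, heq.eventually_nhds] with x hx hx' u τ hτ
    have hdiff := hx.differentiableAt (by simp)
    have := hasDerivWithinAt_of_eq_constCurve_add_primitiveCurve
      (fderiv_solution_integralEquation hX hdiff hx' u) hτ
    rw [fderiv_superposition_apply] at this
    simp only [hfderiv x hdiff]
    rwa [IccExtend_of_mem _ _ hτ, IccExtend_of_mem _ _ hτ]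
  · filter_upwards [hfixed] with x hx hx₀ τ
    rw [hx hx₀]
    rfl

end Flow

section DifferentialForms

set_option maxSynthPendingDepth 3

variable {E F G : Type*} [NormedAddCommGroup E] [NormedSpace ℝ E] [NormedAddCommGroup F]
  [NormedSpace ℝ F] [NormedAddCommGroup G] [NormedSpace ℝ G]

theorem fderiv_clm_apply_const {b : E → F →L[ℝ] G} {x : E} (hb : DifferentiableAt ℝ b x) (v : F)
    (u : E) : fderiv ℝ (fun y ↦ b y v) x u = fderiv ℝ b x u v := by
  simp [fderiv_clm_apply hb (differentiableAt_const v)]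

/-- Differential 1-forms on `E`. -/
abbrev OneForm (E : Type*) [NormedAddCommGroup E] [NormedSpace ℝ E] := E → E →L[ℝ] ℝ

/-- Fields of bilinear forms on `E`. Differential 2-forms are encoded as such fields, in curried
form; that the values are alternating is part of `IsClosedAt`. -/
abbrev TwoForm (E : Type*) [NormedAddCommGroup E] [NormedSpace ℝ E] := E → E →L[ℝ] E →L[ℝ] ℝ

/-- The exterior derivative of a 1-form. -/
def extDerivOne (β : OneForm E) : TwoForm E := fun x ↦ fderiv ℝ β x - (fderiv ℝ β x).flip

theorem extDerivOne_apply (β : OneForm E) (x u v : E) :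
    extDerivOne β x u v = fderiv ℝ β x u v - fderiv ℝ β x v u := rfl

theorem extDerivOne_add {β₁ β₂ : OneForm E} {x : E} (h₁ : DifferentiableAt ℝ β₁ x)
    (h₂ : DifferentiableAt ℝ β₂ x) :
    extDerivOne (β₁ + β₂) x = extDerivOne β₁ x + extDerivOne β₂ x := by
  ext u v
  simp only [extDerivOne_apply, fderiv_add h₁ h₂, add_apply]
  ring

theorem extDerivOne_congr {β₁ β₂ : OneForm E} {x : E} (h : β₁ =ᶠ[𝓝 x] β₂) :
    extDerivOne β₁ x = extDerivOne β₂ x := by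
  simp only [extDerivOne, h.fderiv_eq]

/-- The 2-form `α` is smooth near `x`, and at the point `x` it is alternating and its exterior
derivative vanishes. -/
structure IsClosedAt (α : TwoForm E) (x : E) : Prop where
  contDiffAt : ContDiffAt ℝ ∞ α x
  antisymm : ∀ u v, α x u v = -α x v u
  cyclic : ∀ u v w, fderiv ℝ α x u v w - fderiv ℝ α x v u w + fderiv ℝ α x w u v = 0

namespace IsClosedAt

variable {α α₁ α₂ : TwoForm E} {x : E}

theorem hasFDerivAt (h : IsClosedAt α x) : HasFDerivAt α (fderiv ℝ α x) x :=
  (h.contDiffAt.differentiableAt (by simp)).hasFDerivAt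

theorem congr_of_eventuallyEq (h : IsClosedAt α₁ x) (heq : α₂ =ᶠ[𝓝 x] α₁) : IsClosedAt α₂ x where
  contDiffAt := h.contDiffAt.congr_of_eventuallyEq heq
  antisymm := by simpa only [heq.self_of_nhds] using h.antisymm
  cyclic := by simpa only [heq.fderiv_eq] using h.cyclic

theorem add (h₁ : IsClosedAt α₁ x) (h₂ : IsClosedAt α₂ x) : IsClosedAt (α₁ + α₂) x where
  contDiffAt := h₁.contDiffAt.add h₂.contDiffAt
  antisymm u v := by
    simp only [Pi.add_apply, add_apply]
    linear_combination h₁.antisymm u v + h₂.antisymm u v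
  cyclic u v w := by
    have hadd : fderiv ℝ (α₁ + α₂) x = fderiv ℝ α₁ x + fderiv ℝ α₂ x :=
      (h₁.hasFDerivAt.add h₂.hasFDerivAt).fderiv
    simp only [hadd, add_apply]
    linear_combination h₁.cyclic u v w + h₂.cyclic u v w

theorem const_smul (h : IsClosedAt α x) (c : ℝ) : IsClosedAt (c • α) x where
  contDiffAt := contDiffAt_const.smul h.contDiffAt
  antisymm u v := by
    simp only [Pi.smul_apply, smul_apply, smul_eq_mul]
    linear_combination c * h.antisymm u v
  cyclic u v w := by
    have hsmul : fderiv ℝ (c • α) x = c • fderiv ℝ α x := (h.hasFDerivAt.const_smul c).fderiv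
    simp only [hsmul, smul_apply, smul_eq_mul]
    linear_combination c * h.cyclic u v w

theorem sub (h₁ : IsClosedAt α₁ x) (h₂ : IsClosedAt α₂ x) : IsClosedAt (α₁ - α₂) x := by
  have heq : α₁ - α₂ = α₁ + (-1 : ℝ) • α₂ := by rw [neg_one_smul, sub_eq_add_neg]
  exact heq ▸ h₁.add (h₂.const_smul (-1))

-- For `g = id` this is Cartan's formula `d (ι_X α) = L_X α`.
theorem extDerivOne_contract_comp {α : TwoForm F} {g : E →L[ℝ] F} {X : E → F} {A : E →L[ℝ] F}
    (hα : IsClosedAt α (g x)) (hX : HasFDerivAt X A x) (u v : E) :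
    extDerivOne (fun y ↦ (α (g y) (X y)).comp g) x u v =
      fderiv ℝ α (g x) (X x) (g u) (g v) + α (g x) (A u) (g v) + α (g x) (g u) (A v) := by
  have hαg : HasFDerivAt (fun y ↦ α (g y)) ((fderiv ℝ α (g x)).comp g) x :=
    hα.hasFDerivAt.comp x g.hasFDerivAt
  have hβ : HasFDerivAt (fun y ↦ (α (g y) (X y)).comp g) _ x :=
    (hαg.clm_apply hX).clm_comp (hasFDerivAt_const g x)
  simp only [extDerivOne_apply, hβ.fderiv, add_apply, ContinuousLinearMap.comp_apply,
    ContinuousLinearMap.compL_apply, ContinuousLinearMap.flip_apply,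
    ContinuousLinearMap.comp_zero, zero_add]
  linear_combination -hα.cyclic (X x) (g u) (g v) - hα.antisymm (g u) (A v)

end IsClosedAt

theorem isSymmSndFDerivAt_of_contDiffAt_infty {Θ : E → F} {x : E} (hΘ : ContDiffAt ℝ ∞ Θ x) :
    IsSymmSndFDerivAt ℝ Θ x :=
  hΘ.isSymmSndFDerivAt (by
    rw [minSmoothness_of_isRCLikeNormedField]; exact WithTop.coe_le_coe.2 le_top)

theorem hasFDerivAt_fderiv_of_contDiffAt_infty {Θ : E → F} {x : E} (hΘ : ContDiffAt ℝ ∞ Θ x) :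
    HasFDerivAt (fderiv ℝ Θ) (fderiv ℝ (fderiv ℝ Θ) x) x :=
  ((hΘ.fderiv_right (m := ∞) (by simp)).differentiableAt (by simp)).hasFDerivAt

theorem contDiff_clm_flip : ContDiff ℝ ∞ (ContinuousLinearMap.flip : (E →L[ℝ] F →L[ℝ] G) → _) :=
  (ContinuousLinearMap.flipₗᵢ ℝ E F G).toContinuousLinearEquiv.contDiff

theorem isClosedAt_extDerivOne {β : OneForm E} {x : E} (hβ : ContDiffAt ℝ ∞ β x) :
    IsClosedAt (extDerivOne β) x := by
  have hD : ContDiffAt ℝ ∞ (fderiv ℝ β) x := hβ.fderiv_right (by simp)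
  have hsmooth : ContDiffAt ℝ ∞ (extDerivOne β) x :=
    hD.sub (contDiff_clm_flip.contDiffAt.comp x hD)
  have hderiv (a b c : E) : fderiv ℝ (extDerivOne β) x a b c =
      fderiv ℝ (fderiv ℝ β) x a b c - fderiv ℝ (fderiv ℝ β) x a c b := by
    have hD' := hasFDerivAt_fderiv_of_contDiffAt_infty hβ
    have hd : HasFDerivAt (extDerivOne β) _ x := hD'.sub
      ((ContinuousLinearMap.flipₗᵢ ℝ E E ℝ).toContinuousLinearEquiv.hasFDerivAt.comp x hD')
    rw [hd.fderiv]
    rfl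
  refine ⟨hsmooth, fun u v ↦ (neg_sub _ _).symm, fun u v w ↦ ?_⟩
  have hsymm := isSymmSndFDerivAt_of_contDiffAt_infty hβ
  rw [hderiv, hderiv, hderiv, hsymm.eq u v, hsymm.eq u w, hsymm.eq v w]
  ring

/-- The pullback of a 1-form by a map. -/
def pullbackOne (Θ : E → F) (β : OneForm F) : OneForm E := fun x ↦ (β (Θ x)).comp (fderiv ℝ Θ x)

/-- The pullback of a 2-form by a map. -/
def pullbackTwo (Θ : E → F) (α : TwoForm F) : TwoForm E :=
  fun x ↦ (α (Θ x)).bilinearComp (fderiv ℝ Θ x) (fderiv ℝ Θ x)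

theorem pullbackTwo_apply (Θ : E → F) (α : TwoForm F) (x u v : E) :
    pullbackTwo Θ α x u v = α (Θ x) (fderiv ℝ Θ x u) (fderiv ℝ Θ x v) := rfl

theorem contDiffAt_pullbackOne {Θ : E → F} {β : OneForm F} {x : E} (hΘ : ContDiffAt ℝ ∞ Θ x)
    (hβ : ContDiffAt ℝ ∞ β (Θ x)) : ContDiffAt ℝ ∞ (pullbackOne Θ β) x :=
  (hβ.comp x hΘ).clm_comp (hΘ.fderiv_right (by simp))

theorem contDiffAt_pullbackTwo {Θ : E → F} {α : TwoForm F} {x : E} (hΘ : ContDiffAt ℝ ∞ Θ x)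
    (hα : ContDiffAt ℝ ∞ α (Θ x)) : ContDiffAt ℝ ∞ (pullbackTwo Θ α) x := by
  have hD : ContDiffAt ℝ ∞ (fderiv ℝ Θ) x := hΘ.fderiv_right (by simp)
  exact contDiff_clm_flip.contDiffAt.comp x
    ((contDiff_clm_flip.contDiffAt.comp x ((hα.comp x hΘ).clm_comp hD)).clm_comp hD)

theorem pullbackTwo_comp {Θ : E → F} {Ψ : F → G} (α : TwoForm G) {x : E}
    (hΨ : DifferentiableAt ℝ Ψ (Θ x)) (hΘ : DifferentiableAt ℝ Θ x) :
    pullbackTwo (Ψ ∘ Θ) α x = pullbackTwo Θ (pullbackTwo Ψ α) x := by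
  ext u v
  simp [pullbackTwo_apply, fderiv_comp x hΨ hΘ]

theorem fderiv_pullbackTwo_apply {Θ : E → F} {α : TwoForm F} {x : E} (hΘ : ContDiffAt ℝ ∞ Θ x)
    (hα : ContDiffAt ℝ ∞ α (Θ x)) (u v w : E) :
    fderiv ℝ (pullbackTwo Θ α) x u v w =
      fderiv ℝ α (Θ x) (fderiv ℝ Θ x u) (fderiv ℝ Θ x v) (fderiv ℝ Θ x w) +
        α (Θ x) (fderiv ℝ (fderiv ℝ Θ) x u v) (fderiv ℝ Θ x w) +
        α (Θ x) (fderiv ℝ Θ x v) (fderiv ℝ (fderiv ℝ Θ) x u w) := by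
  have hD (a : E) :=
    (hasFDerivAt_fderiv_of_contDiffAt_infty hΘ).clm_apply (hasFDerivAt_const a x)
  have hαΘ : HasFDerivAt (fun y ↦ α (Θ y)) ((fderiv ℝ α (Θ x)).comp (fderiv ℝ Θ x)) x :=
    (hα.differentiableAt (by simp)).hasFDerivAt.comp x
      (hΘ.differentiableAt (by simp)).hasFDerivAt
  have hp := (((contDiffAt_pullbackTwo hΘ hα).differentiableAt (by simp)).hasFDerivAt.clm_apply
    (hasFDerivAt_const v x)).clm_apply (hasFDerivAt_const w x)
  have := DFunLike.congr_fun (hp.unique ((hαΘ.clm_apply (hD v)).clm_apply (hD w))) u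
  simp only [add_apply, ContinuousLinearMap.comp_apply, ContinuousLinearMap.flip_apply,
    zero_apply, map_zero, zero_add, ContinuousLinearMap.coe_coe] at this
  rw [this]
  ring

theorem IsClosedAt.pullbackTwo {Θ : E → F} {α : TwoForm F} {x : E} (hα : IsClosedAt α (Θ x))
    (hΘ : ContDiffAt ℝ ∞ Θ x) : IsClosedAt (pullbackTwo Θ α) x := by
  refine ⟨contDiffAt_pullbackTwo hΘ hα.contDiffAt, fun u v ↦ hα.antisymm _ _, fun u v w ↦ ?_⟩
  have hsymm := isSymmSndFDerivAt_of_contDiffAt_infty hΘ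
  simp only [fderiv_pullbackTwo_apply hΘ hα.contDiffAt]
  rw [hsymm.eq v u, hsymm.eq w u, hsymm.eq w v]
  linear_combination hα.cyclic (fderiv ℝ Θ x u) (fderiv ℝ Θ x v) (fderiv ℝ Θ x w) +
    hα.antisymm (fderiv ℝ Θ x v) (fderiv ℝ (fderiv ℝ Θ) x u w)

theorem extDerivOne_pullbackOne {Θ : E → F} {β : OneForm F} {x : E} (hΘ : ContDiffAt ℝ ∞ Θ x)
    (hβ : ContDiffAt ℝ ∞ β (Θ x)) :
    extDerivOne (pullbackOne Θ β) x = pullbackTwo Θ (extDerivOne β) x := by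
  have hβΘ : HasFDerivAt (fun y ↦ β (Θ y)) ((fderiv ℝ β (Θ x)).comp (fderiv ℝ Θ x)) x :=
    (hβ.differentiableAt (by simp)).hasFDerivAt.comp x
      (hΘ.differentiableAt (by simp)).hasFDerivAt
  have hpull : HasFDerivAt (pullbackOne Θ β) _ x :=
    hβΘ.clm_comp (hasFDerivAt_fderiv_of_contDiffAt_infty hΘ)
  ext u v
  rw [extDerivOne_apply, hpull.fderiv]
  simp [pullbackTwo_apply, extDerivOne_apply,
    (isSymmSndFDerivAt_of_contDiffAt_infty hΘ).eq v u]

end DifferentialForms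

section Moser

set_option maxSynthPendingDepth 3

variable {E : Type u} [NormedAddCommGroup E] [NormedSpace ℝ E]

theorem hasDerivWithinAt_bilinear_apply {V : Type*} [NormedAddCommGroup V] [NormedSpace ℝ V]
    {α : V → E →L[ℝ] E →L[ℝ] ℝ} {c : ℝ → V} {a b : ℝ → E} {c' : V} {a' b' : E} {s : Set ℝ} {τ : ℝ}
    (hα : DifferentiableAt ℝ α (c τ)) (hc : HasDerivWithinAt c c' s τ)
    (ha : HasDerivWithinAt a a' s τ) (hb : HasDerivWithinAt b b' s τ) :
    HasDerivWithinAt (fun τ ↦ α (c τ) (a τ) (b τ))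
      (fderiv ℝ α (c τ) c' (a τ) (b τ) + α (c τ) a' (b τ) + α (c τ) (a τ) b') s τ := by
  have hαc : HasDerivWithinAt (fun τ ↦ α (c τ)) (fderiv ℝ α (c τ) c') s τ :=
    hα.hasFDerivAt.comp_hasDerivWithinAt τ hc
  simpa using (hαc.clm_apply ha).clm_apply hb

theorem IsFlowGerm.pullbackTwo_eventuallyEq {X : ℝ × E → E} {Φ : ℝ → E → E} (hΦ : IsFlowGerm X Φ)
    {α : ℝ × E → E →L[ℝ] E →L[ℝ] ℝ} (hα : ContDiff ℝ ∞ α)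
    (hinv : ∀ᶠ y in 𝓝 0, ∀ τ ∈ I, ∀ u v, fderiv ℝ α (τ, y) (1, X (τ, y)) u v +
      α (τ, y) (fderiv ℝ X (τ, y) (0, u)) v + α (τ, y) u (fderiv ℝ X (τ, y) (0, v)) = 0) :
    pullbackTwo (Φ 1) (fun y ↦ α (1, y)) =ᶠ[𝓝 0] fun y ↦ α (0, y) := by
  filter_upwards [hΦ.zero_apply.eventually_nhds, hΦ.eventually_forall_mem _ hinv,
    hΦ.hasDerivWithinAt, hΦ.hasDerivWithinAt_fderiv] with x h₀ hinv hd hd'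
  ext u v
  have hder (τ : ℝ) (hτ : τ ∈ I) : HasDerivWithinAt
      (fun τ ↦ α (τ, Φ τ x) (fderiv ℝ (Φ τ) x u) (fderiv ℝ (Φ τ) x v)) 0 I τ :=
    (hasDerivWithinAt_bilinear_apply (hα.differentiable (by simp) _)
      ((hasDerivWithinAt_id τ I).prodMk (hd τ hτ)) (hd' u τ hτ) (hd' v τ hτ)).congr_deriv
      (hinv τ hτ τ hτ _ _)
  have hconst := constant_of_has_deriv_right_zero (fun τ hτ ↦ (hder τ hτ).continuousWithinAt)
    (fun τ hτ ↦ (hder τ (Ico_subset_Icc_self hτ)).mono_of_mem_nhdsWithin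
      (Icc_mem_nhdsGE_of_mem hτ)) 1 (right_mem_Icc.2 zero_le_one)
  have hid : fderiv ℝ (Φ 0) x = .id ℝ E := (EventuallyEq.fderiv_eq h₀).trans fderiv_id
  simpa only [pullbackTwo_apply, hid, h₀.self_of_nhds, ContinuousLinearMap.id_apply] using hconst

/-- The time-dependent 2-form `(1 - τ) ω₀ + τ ω₁`. -/
def interpolation (ω₀ ω₁ : TwoForm E) : ℝ × E → E →L[ℝ] E →L[ℝ] ℝ :=
  fun p ↦ ω₀ p.2 + p.1 • (ω₁ p.2 - ω₀ p.2)

theorem contDiff_interpolation {ω₀ ω₁ : TwoForm E} (hω₀ : ContDiff ℝ ∞ ω₀) (hω₁ : ContDiff ℝ ∞ ω₁) :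
    ContDiff ℝ ∞ (interpolation ω₀ ω₁) :=
  (hω₀.comp contDiff_snd).add
    (contDiff_fst.smul ((hω₁.comp contDiff_snd).sub (hω₀.comp contDiff_snd)))

-- By Cartan's formula the Lie derivative of `ω_τ` along `X_τ` is `d γ = ω₀ - ω₁`, which cancels
-- `∂ω_τ/∂τ = ω₁ - ω₀`.
theorem lieDerivative_interpolation_eq_zero {ω₀ ω₁ : TwoForm E} {γ : OneForm E} {X : ℝ × E → E}
    {y : E} {τ : ℝ} (hω₀ : IsClosedAt ω₀ y) (hω₁ : IsClosedAt ω₁ y)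
    (hX : DifferentiableAt ℝ X (τ, y))
    (hXγ : ∀ᶠ z in 𝓝 y, interpolation ω₀ ω₁ (τ, z) (X (τ, z)) = γ z)
    (hγ : ω₀ y - ω₁ y = extDerivOne γ y) (u v : E) :
    fderiv ℝ (interpolation ω₀ ω₁) (τ, y) (1, X (τ, y)) u v +
      interpolation ω₀ ω₁ (τ, y) (fderiv ℝ X (τ, y) (0, u)) v +
      interpolation ω₀ ω₁ (τ, y) u (fderiv ℝ X (τ, y) (0, v)) = 0 := by
  have hXy : HasFDerivAt (fun z ↦ X (τ, z))
      ((fderiv ℝ X (τ, y)).comp (ContinuousLinearMap.inr ℝ ℝ E)) y :=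
    hX.hasFDerivAt.comp y (hasFDerivAt_prodMk_right τ y)
  have hcontract : extDerivOne
      (fun z ↦ ((ω₀ + τ • (ω₁ - ω₀)) z (X (τ, z))).comp (.id ℝ E)) y = ω₀ y - ω₁ y :=
    (extDerivOne_congr hXγ).trans hγ.symm
  have hcartan := (DFunLike.congr_fun (DFunLike.congr_fun hcontract u) v).symm.trans
    ((hω₀.add ((hω₁.sub hω₀).const_smul τ)).extDerivOne_contract_comp (g := .id ℝ E) hXy u v)
  have hslice : HasFDerivAt (ω₀ + τ • (ω₁ - ω₀)) _ y :=
    hω₀.hasFDerivAt.add ((hω₁.hasFDerivAt.sub hω₀.hasFDerivAt).const_smul τ)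
  have hω₀' : HasFDerivAt (fun p : ℝ × E ↦ ω₀ p.2) _ (τ, y) :=
    HasFDerivAt.comp (τ, y) hω₀.hasFDerivAt hasFDerivAt_snd
  have hω₁' : HasFDerivAt (fun p : ℝ × E ↦ ω₁ p.2) _ (τ, y) :=
    HasFDerivAt.comp (τ, y) hω₁.hasFDerivAt hasFDerivAt_snd
  have htotal : HasFDerivAt (interpolation ω₀ ω₁) _ (τ, y) :=
    hω₀'.add (hasFDerivAt_fst.smul (hω₁'.sub hω₀'))
  rw [htotal.fderiv]
  simp only [hslice.fderiv, Pi.add_apply, Pi.smul_apply, Pi.sub_apply, sub_apply, add_apply,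
    smul_apply, smul_eq_mul, ContinuousLinearMap.comp_apply, ContinuousLinearMap.inr_apply,
    ContinuousLinearMap.id_apply] at hcartan
  simp only [interpolation, Pi.sub_apply, sub_apply, add_apply, smul_apply, smul_eq_mul, one_smul,
    ContinuousLinearMap.comp_apply, ContinuousLinearMap.smulRight_apply,
    ContinuousLinearMap.coe_fst', ContinuousLinearMap.coe_snd']
  linear_combination -hcartan

variable [FiniteDimensional ℝ E]

theorem exists_contDiff_eventually_rightInverse {A : E →L[ℝ] E →L[ℝ] ℝ}
    (hA : Function.Injective A) :
    ∃ inv : (E →L[ℝ] E →L[ℝ] ℝ) → (E →L[ℝ] ℝ) →L[ℝ] E, ContDiff ℝ ∞ inv ∧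
      ∀ᶠ B in 𝓝 A, ∀ ξ, B (inv B ξ) = ξ := by
  obtain ⟨e, rfl⟩ : ∃ e : E ≃L[ℝ] E →L[ℝ] ℝ, (e : E →L[ℝ] E →L[ℝ] ℝ) = A := by
    have hrank : Module.finrank ℝ E = Module.finrank ℝ (E →L[ℝ] ℝ) := by
      rw [← (LinearMap.toContinuousLinearMap (𝕜 := ℝ) (E := E) (F' := ℝ)).finrank_eq]
      exact Subspace.dual_finrank_eq.symm
    exact ⟨(LinearEquiv.ofInjectiveOfFinrankEq (A : E →ₗ[ℝ] E →L[ℝ] ℝ) hA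
      hrank).toContinuousLinearEquiv, rfl⟩
  obtain ⟨inv, hinv, heq⟩ := exists_contDiff_eventuallyEq (a := (e : E →L[ℝ] E →L[ℝ] ℝ))
    (f := ContinuousLinearMap.inverse) <| by
      filter_upwards [e.nhds] with B hB
      obtain ⟨e', rfl⟩ := hB
      exact contDiffAt_map_inverse e'
  refine ⟨inv, hinv, ?_⟩
  filter_upwards [e.nhds, heq] with B hB hinvB ξ
  obtain ⟨e', rfl⟩ := hB
  simp [hinvB]

theorem exists_moserField {ω₀ ω₁ : TwoForm E} {γ : OneForm E} (hω₀ : ContDiff ℝ ∞ ω₀)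
    (hω₁ : ContDiff ℝ ∞ ω₁) (hγ : ContDiff ℝ ∞ γ) (heq : ω₀ 0 = ω₁ 0)
    (hinj : Function.Injective (ω₀ 0)) (hγ₀ : γ 0 = 0) (hγ₀' : fderiv ℝ γ 0 = 0) :
    ∃ X : ℝ × E → E, ContDiff ℝ ∞ X ∧ (∀ τ x, γ x = 0 → X (τ, x) = 0) ∧
      (∀ τ u, fderiv ℝ X (τ, 0) (0, u) = 0) ∧
      ∀ᶠ y in 𝓝 0, ∀ τ ∈ I, interpolation ω₀ ω₁ (τ, y) (X (τ, y)) = γ y := by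
  obtain ⟨inv, hinv, hright⟩ := exists_contDiff_eventually_rightInverse hinj
  have hB := contDiff_interpolation hω₀ hω₁
  have hB₀ (τ : ℝ) : interpolation ω₀ ω₁ (τ, 0) = ω₀ 0 := by simp [interpolation, heq]
  refine ⟨fun p ↦ inv (interpolation ω₀ ω₁ p) (γ p.2),
    (hinv.comp hB).clm_apply (hγ.comp contDiff_snd), fun τ x hx ↦ by simp [hx], fun τ u ↦ ?_, ?_⟩
  · have hγ' : HasFDerivAt (fun p : ℝ × E ↦ γ p.2) _ (τ, (0 : E)) :=
      HasFDerivAt.comp (τ, (0 : E)) (hγ.differentiable (by simp) 0).hasFDerivAt hasFDerivAt_snd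
    have hX' := ((hinv.comp hB).differentiable (by simp) (τ, (0 : E))).hasFDerivAt.clm_apply hγ'
    refine (DFunLike.congr_fun hX'.fderiv (0, u)).trans ?_
    simp [hγ₀, hγ₀']
  · refine isCompact_Icc.eventually_forall_of_forall_eventually fun τ _ ↦ ?_
    have hlim : Tendsto (fun z : E × ℝ ↦ interpolation ω₀ ω₁ (z.2, z.1)) (𝓝 (0, τ)) (𝓝 (ω₀ 0)) :=
      (hB.continuous.comp continuous_swap).tendsto' _ _ (hB₀ τ)
    exact (hlim.eventually hright).mono fun z hz ↦ hz _

theorem exists_moser_isotopy {ω₀ ω₁ : TwoForm E} {γ : OneForm E} (hω₀ : ContDiff ℝ ∞ ω₀)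
    (hω₁ : ContDiff ℝ ∞ ω₁) (hγ : ContDiff ℝ ∞ γ) (hclosed₀ : ∀ᶠ x in 𝓝 0, IsClosedAt ω₀ x)
    (hclosed₁ : ∀ᶠ x in 𝓝 0, IsClosedAt ω₁ x) (heq : ω₀ 0 = ω₁ 0)
    (hinj : Function.Injective (ω₀ 0)) (hγ₀ : γ 0 = 0) (hγ₀' : fderiv ℝ γ 0 = 0)
    (hdγ : ω₀ - ω₁ =ᶠ[𝓝 0] extDerivOne γ) :
    ∃ Φ : E → E, (∀ᶠ x in 𝓝 0, ContDiffAt ℝ ∞ Φ x) ∧ (∀ᶠ x in 𝓝 0, γ x = 0 → Φ x = x) ∧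
      pullbackTwo Φ ω₁ =ᶠ[𝓝 0] ω₀ := by
  have := FiniteDimensional.complete ℝ E
  obtain ⟨X, hX, hXzero, hX', hXγ⟩ := exists_moserField hω₀ hω₁ hγ heq hinj hγ₀ hγ₀'
  obtain ⟨Φ, hΦ⟩ := exists_isFlowGerm hX (fun τ ↦ hXzero τ 0 hγ₀) hX'
  refine ⟨Φ 1, hΦ.contDiffAt.mono fun x hx ↦ hx 1,
    hΦ.apply_eq_self.mono fun x hx hγx ↦ hx (fun τ _ ↦ hXzero τ x hγx) 1, ?_⟩
  have hinv := hΦ.pullbackTwo_eventuallyEq (contDiff_interpolation hω₀ hω₁) <| by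
    filter_upwards [hXγ.eventually_nhds, hclosed₀, hclosed₁, hdγ] with y hy h₀ h₁ hdγ τ hτ
    exact lieDerivative_interpolation_eq_zero h₀ h₁ (hX.differentiable (by simp) _)
      (hy.mono fun z hz ↦ hz τ hτ) hdγ
  simpa [interpolation] using hinv

end Moser

section HomotopyOperator

set_option maxSynthPendingDepth 3

variable {E : Type u} [NormedAddCommGroup E] [NormedSpace ℝ E]

/-- The integrand at time `s` of `homotopyOperator α h`: the contraction of `α` with the velocity of
`h`, pulled back by `h s`. -/
def homotopyIntegrand (α : TwoForm E) (h : ℝ → E →L[ℝ] E) (p : ℝ × E) : E →L[ℝ] ℝ :=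
  (α (h p.1 p.2) (deriv h p.1 p.2)).comp (h p.1)

/-- The homotopy operator of a family of linear maps `h s`, `0 ≤ s ≤ 1`: a primitive of
`(h 1)^* α - (h 0)^* α` when `α` is closed. -/
def homotopyOperator (α : TwoForm E) (h : ℝ → E →L[ℝ] E) : OneForm E :=
  fun x ↦ ∫ s in (0 : ℝ)..1, homotopyIntegrand α h (s, x)

variable {α : TwoForm E} {h : ℝ → E →L[ℝ] E}

theorem contDiff_homotopyIntegrand (hα : ContDiff ℝ ∞ α) (hh : ContDiff ℝ ∞ h) :
    ContDiff ℝ ∞ (homotopyIntegrand α h) := by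
  have hh' : ContDiff ℝ ∞ (deriv h) := (contDiff_infty_iff_deriv.1 hh).2
  have hpt : ContDiff ℝ ∞ fun p : ℝ × E ↦ h p.1 p.2 :=
    (hh.comp contDiff_fst).clm_apply contDiff_snd
  exact ((hα.comp hpt).clm_apply ((hh'.comp contDiff_fst).clm_apply contDiff_snd)).clm_comp
    (hh.comp contDiff_fst)

theorem contDiff_homotopyOperator (hα : ContDiff ℝ ∞ α) (hh : ContDiff ℝ ∞ h) :
    ContDiff ℝ ∞ (homotopyOperator α h) :=
  contDiff_intervalIntegral (contDiff_homotopyIntegrand hα hh)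

theorem homotopyOperator_eq_zero {x : E}
    (hx : ∀ s ∈ I, (α (h s x) (deriv h s x)).comp (h s) = 0) : homotopyOperator α h x = 0 := by
  refine intervalIntegral.integral_zero_ae (.of_forall fun s hs ↦ hx s ?_)
  rw [uIoc_of_le zero_le_one] at hs
  exact Ioc_subset_Icc_self hs

theorem fderiv_homotopyIntegrand_apply (hα : ContDiff ℝ ∞ α) (hh : ContDiff ℝ ∞ h) (s : ℝ)
    (x u : E) :
    fderiv ℝ (homotopyIntegrand α h) (s, x) (0, u) =
      fderiv ℝ (fun y ↦ (α (h s y) (deriv h s y)).comp (h s)) x u := by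
  have := ((contDiff_homotopyIntegrand hα hh).differentiable (by simp) (s, x)).hasFDerivAt.comp x
    (hasFDerivAt_prodMk_right s x)
  exact (DFunLike.congr_fun this.fderiv u).symm

theorem continuous_fderiv_homotopyIntegrand (hα : ContDiff ℝ ∞ α) (hh : ContDiff ℝ ∞ h)
    (x u v : E) : Continuous fun s ↦ fderiv ℝ (homotopyIntegrand α h) (s, x) (0, u) v :=
  ((((contDiff_homotopyIntegrand hα hh).continuous_fderiv (by simp)).comp
    (continuous_id.prodMk continuous_const)).clm_apply continuous_const).clm_apply continuous_const

theorem fderiv_homotopyOperator_apply (hα : ContDiff ℝ ∞ α) (hh : ContDiff ℝ ∞ h) (x u v : E) :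
    fderiv ℝ (homotopyOperator α h) x u v =
      ∫ s in (0 : ℝ)..1, fderiv ℝ (homotopyIntegrand α h) (s, x) (0, u) v := by
  have hF := contDiff_homotopyIntegrand hα hh
  have hcont : Continuous fun s : ℝ ↦ fderiv ℝ (homotopyIntegrand α h) (s, x) (0, u) :=
    ((hF.continuous_fderiv (by simp)).comp (continuous_id.prodMk continuous_const)).clm_apply
      continuous_const
  exact (DFunLike.congr_fun (fderiv_intervalIntegral_apply hF x u) v).trans
    (ContinuousLinearMap.intervalIntegral_apply (hcont.intervalIntegrable 0 1) v)

theorem extDerivOne_homotopyOperator (hα : ContDiff ℝ ∞ α) (hh : ContDiff ℝ ∞ h)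
    (hclosed : ∀ᶠ x in 𝓝 0, IsClosedAt α x) :
    extDerivOne (homotopyOperator α h) =ᶠ[𝓝 0] pullbackTwo (h 1) α - pullbackTwo (h 0) α := by
  have htube : ∀ᶠ x in 𝓝 (0 : E), ∀ s ∈ I, IsClosedAt α (h s x) := by
    refine isCompact_Icc.eventually_forall_of_forall_eventually fun s _ ↦ ?_
    have hcont : Continuous fun z : E × ℝ ↦ h z.2 z.1 :=
      (hh.continuous.comp continuous_snd).clm_apply continuous_fst
    exact (hcont.tendsto' (0, s) 0 (map_zero _)).eventually hclosed
  filter_upwards [htube] with x hx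
  ext u v
  have hint (u v : E) := (continuous_fderiv_homotopyIntegrand hα hh x u v).intervalIntegrable
    (μ := MeasureTheory.volume) 0 1
  rw [extDerivOne_apply, fderiv_homotopyOperator_apply hα hh, fderiv_homotopyOperator_apply hα hh,
    ← intervalIntegral.integral_sub (hint u v) (hint v u)]
  have hderiv (s : ℝ) (w : E) : HasDerivWithinAt (fun s ↦ h s w) (deriv h s w) univ s := by
    have := (hh.differentiable (by simp) s).hasDerivAt.clm_apply (hasDerivAt_const s w)
    simpa only [map_zero, add_zero] using this.hasDerivWithinAt
  have hlie (s : ℝ) (hs : s ∈ uIcc 0 1) : HasDerivAt (fun s ↦ α (h s x) (h s u) (h s v))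
      (fderiv ℝ (homotopyIntegrand α h) (s, x) (0, u) v -
        fderiv ℝ (homotopyIntegrand α h) (s, x) (0, v) u) s := by
    rw [uIcc_of_le zero_le_one] at hs
    rw [fderiv_homotopyIntegrand_apply hα hh, fderiv_homotopyIntegrand_apply hα hh,
      ← extDerivOne_apply, (hx s hs).extDerivOne_contract_comp (deriv h s).hasFDerivAt,
      ← hasDerivWithinAt_univ]
    exact hasDerivWithinAt_bilinear_apply (hα.differentiable (by simp) _) (hderiv s x)
      (hderiv s u) (hderiv s v)
  rw [intervalIntegral.integral_eq_sub_of_hasDerivAt hlie ((hint u v).sub (hint v u))]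
  simp [pullbackTwo_apply]

end HomotopyOperator

section Hadamard

variable {E : Type u} [NormedAddCommGroup E] [NormedSpace ℝ E]

theorem exists_contDiff_eq_add_apply_self {c : E → ℝ} (hc : ContDiff ℝ ∞ c) :
    ∃ C : E → E →L[ℝ] ℝ, ContDiff ℝ ∞ C ∧ (∀ x, c x = c 0 + C x x) ∧ C 0 = fderiv ℝ c 0 := by
  have hG : ContDiff ℝ ∞ fun p : ℝ × E ↦ fderiv ℝ c (p.1 • p.2) :=
    (hc.fderiv_right (by simp)).comp (contDiff_fst.smul contDiff_snd)
  refine ⟨fun x ↦ ∫ s in (0 : ℝ)..1, fderiv ℝ c (s • x), contDiff_intervalIntegral hG,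
    fun x ↦ ?_, by simp⟩
  have hcont : Continuous fun s : ℝ ↦ fderiv ℝ c (s • x) :=
    hG.continuous.comp (continuous_id.prodMk continuous_const)
  have hderiv (s : ℝ) : HasDerivAt (fun s : ℝ ↦ c (s • x)) (fderiv ℝ c (s • x) x) s := by
    have hline : HasDerivAt (fun s : ℝ ↦ s • x) x s := by
      simpa using (hasDerivAt_id s).smul_const x
    exact (hc.differentiable (by simp) _).hasFDerivAt.comp_hasDerivAt s hline
  rw [ContinuousLinearMap.intervalIntegral_apply (hcont.intervalIntegrable 0 1),
    intervalIntegral.integral_eq_sub_of_hasDerivAt (fun s _ ↦ hderiv s)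
      ((hcont.clm_apply continuous_const).intervalIntegrable 0 1)]
  simp

end Hadamard

section Witt

variable {K V V' U W : Type*} [Field K] [AddCommGroup V] [Module K V] [AddCommGroup V']
  [Module K V'] [AddCommGroup U] [Module K U] [AddCommGroup W] [Module K W]

/-- The linear map `L` embeds the subspace `S` of `(V, B)` isometrically into `(V', B')`. -/
structure IsIsometricOn (B : LinearMap.BilinForm K V) (B' : LinearMap.BilinForm K V')
    (S : Submodule K V) (L : V →ₗ[K] V') : Prop where
  injOn : Set.InjOn L S
  apply_apply : ∀ u ∈ S, ∀ v ∈ S, B' (L u) (L v) = B u v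

variable {B : LinearMap.BilinForm K V} {B' : LinearMap.BilinForm K V'}

namespace IsIsometricOn

variable {S : Submodule K V} {L : V →ₗ[K] V'}

theorem congr {L' : V →ₗ[K] V'} (h : IsIsometricOn B B' S L) (heq : ∀ u ∈ S, L' u = L u) :
    IsIsometricOn B B' S L' where
  injOn := h.injOn.congr fun u hu ↦ (heq u hu).symm
  apply_apply u hu v hv := by rw [heq u hu, heq v hv, h.apply_apply u hu v hv]

theorem sup_span_singleton (h : IsIsometricOn B B' S L) (hB : B.IsAlt) (hB' : B'.IsAlt) {v : V}
    (hv : L v ∉ S.map L) (hvS : ∀ u ∈ S, B' (L v) (L u) = B v u) :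
    IsIsometricOn B B' (S ⊔ Submodule.span K {v}) L := by
  have hdecomp {u : V} (hu : u ∈ S ⊔ Submodule.span K {v}) : ∃ w ∈ S, ∃ c : K, w + c • v = u := by
    simpa only [Submodule.mem_sup, Submodule.mem_span_singleton, exists_exists_eq_and] using hu
  refine ⟨LinearMap.injOn_of_disjoint_ker subset_rfl (Submodule.disjoint_def.2 fun u hu hLu ↦ ?_),
    fun u hu u' hu' ↦ ?_⟩
  · obtain ⟨w, hw, c, rfl⟩ := hdecomp hu
    rw [LinearMap.mem_ker, map_add, map_smul] at hLu
    obtain rfl : c = 0 := by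
      by_contra hc
      refine hv (((S.map L).smul_mem_iff hc).1 ?_)
      rw [eq_neg_of_add_eq_zero_right hLu]
      exact neg_mem (Submodule.mem_map_of_mem hw)
    rw [zero_smul, add_zero] at hLu ⊢
    exact h.injOn hw S.zero_mem (hLu.trans (map_zero L).symm)
  · obtain ⟨w, hw, c, rfl⟩ := hdecomp hu
    obtain ⟨w', hw', c', rfl⟩ := hdecomp hu'
    have hwv : B' (L w) (L v) = B w v := by
      rw [← LinearMap.IsAlt.neg hB', ← LinearMap.IsAlt.neg hB, hvS w hw]
    simp only [map_add, map_smul, LinearMap.add_apply, LinearMap.smul_apply, smul_eq_mul,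
      h.apply_apply w hw w' hw', hvS w' hw', hwv, hB v, hB' (L v)]

end IsIsometricOn

variable [FiniteDimensional K V] [FiniteDimensional K V']

theorem ker_le_range_of_ker_le_range {T : V →ₗ[K] U} {T' : V' →ₗ[K] U} {i : W →ₗ[K] V}
    {i' : W →ₗ[K] V'} (hdim : Module.finrank K V = Module.finrank K V')
    (hT : Function.Surjective T) (hT' : Function.Surjective T') (hi : Function.Injective i)
    (hi' : Function.Injective i') (hcomm : T ∘ₗ i = T' ∘ₗ i')
    (h : LinearMap.ker T' ≤ LinearMap.range i') : LinearMap.ker T ≤ LinearMap.range i := by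
  set R := LinearMap.ker (T ∘ₗ i)
  have hRi : R.map i ≤ LinearMap.ker T := by
    rw [Submodule.map_le_iff_le_comap, ← LinearMap.ker_comp]
  have hRi' : R.map i' = LinearMap.ker T' := by
    simp only [R, hcomm]
    rw [LinearMap.ker_comp, Submodule.map_comap_eq, inf_eq_right.2 h]
  have hrank := LinearMap.finrank_range_add_finrank_ker T
  have hrank' := LinearMap.finrank_range_add_finrank_ker T'
  rw [LinearMap.range_eq_top.2 hT] at hrank
  rw [LinearMap.range_eq_top.2 hT'] at hrank'
  have heq : R.map i = LinearMap.ker T := by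
    apply Submodule.eq_of_le_of_finrank_eq hRi
    have hmap : Module.finrank K (R.map i) = Module.finrank K (LinearMap.ker T') := by
      rw [← hRi', ← (R.equivMapOfInjective i hi).finrank_eq,
        ← (R.equivMapOfInjective i' hi').finrank_eq]
    omega
  exact heq ▸ LinearMap.map_le_range

theorem exists_notMem_range_apply_eq {T : V →ₗ[K] U} {T' : V' →ₗ[K] U} {i : W →ₗ[K] V}
    {i' : W →ₗ[K] V'} (hdim : Module.finrank K V = Module.finrank K V')
    (hT : Function.Surjective T) (hT' : Function.Surjective T') (hi : Function.Injective i)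
    (hi' : Function.Injective i') (hcomm : T ∘ₗ i = T' ∘ₗ i') {v : V}
    (hv : v ∉ LinearMap.range i) : ∃ v' ∉ LinearMap.range i', T' v' = T v := by
  obtain ⟨z, hz⟩ := hT' (T v)
  by_cases hzi : z ∈ LinearMap.range i'
  swap
  · exact ⟨z, hzi, hz⟩
  obtain ⟨w, rfl⟩ := hzi
  have hker : ¬ LinearMap.ker T ≤ LinearMap.range i := fun hle ↦ by
    refine hv (((LinearMap.range i).sub_mem_iff_left (LinearMap.mem_range_self i w)).1 (hle ?_))
    rw [LinearMap.mem_ker, map_sub, ← hz, sub_eq_zero]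
    exact (LinearMap.congr_fun hcomm w).symm
  obtain ⟨y, hy, hyi⟩ := SetLike.not_le_iff_exists.1
    (mt (ker_le_range_of_ker_le_range hdim hT hT' hi hi' hcomm) hker)
  refine ⟨y + i' w, fun h ↦ hyi ?_, by rw [map_add, LinearMap.mem_ker.1 hy, zero_add, hz]⟩
  exact ((LinearMap.range i').add_mem_iff_left (LinearMap.mem_range_self i' w)).1 h

theorem surjective_of_injective_bilinForm (hB : Function.Injective B) : Function.Surjective B :=
  (LinearMap.injective_iff_surjective_of_finrank_eq_finrank Subspace.dual_finrank_eq.symm).1 hB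

namespace IsIsometricOn

variable {S : Submodule K V} {L : V →ₗ[K] V'}

theorem exists_notMem_map (h : IsIsometricOn B B' S L)
    (hdim : Module.finrank K V = Module.finrank K V') (hB : Function.Injective B)
    (hB' : Function.Injective B') {v : V} (hv : v ∉ S) :
    ∃ v' ∉ S.map L, ∀ u ∈ S, B' v' (L u) = B v u := by
  have hi' : Function.Injective (L ∘ₗ S.subtype) := injOn_iff_injective.1 h.injOn
  obtain ⟨v', hv', heq⟩ := exists_notMem_range_apply_eq (i := S.subtype) (i' := L ∘ₗ S.subtype)
    (T := S.subtype.dualMap ∘ₗ B) (T' := (L ∘ₗ S.subtype).dualMap ∘ₗ B') hdim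
    ((LinearMap.dualMap_surjective_of_injective S.subtype_injective).comp
      (surjective_of_injective_bilinForm hB))
    ((LinearMap.dualMap_surjective_of_injective hi').comp (surjective_of_injective_bilinForm hB'))
    S.subtype_injective hi' (by ext u w; exact (h.apply_apply u u.2 w w.2).symm)
    (v := v) (by rwa [Submodule.range_subtype])
  refine ⟨v', by rwa [LinearMap.range_comp, Submodule.range_subtype] at hv', fun u hu ↦ ?_⟩
  exact LinearMap.congr_fun heq ⟨u, hu⟩

theorem exists_extension_sup_span_singleton (h : IsIsometricOn B B' S L)
    (hdim : Module.finrank K V = Module.finrank K V') (hB : Function.Injective B)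
    (hB' : Function.Injective B') (hBalt : B.IsAlt) (hBalt' : B'.IsAlt) {v : V} (hv : v ∉ S) :
    ∃ L' : V →ₗ[K] V', (∀ u ∈ S, L' u = L u) ∧
      IsIsometricOn B B' (S ⊔ Submodule.span K {v}) L' := by
  obtain ⟨v', hv', hv'S⟩ := h.exists_notMem_map hdim hB hB' hv
  obtain ⟨φ, hφv, hφS⟩ := Submodule.exists_le_ker_of_notMem hv
  let L' : V →ₗ[K] V' := L + ((φ v)⁻¹ • φ).smulRight (v' - L v)
  have hL'S (u : V) (hu : u ∈ S) : L' u = L u := by simp [L', LinearMap.mem_ker.1 (hφS hu)]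
  have hL'v : L' v = v' := by simp [L', hφv]
  refine ⟨L', hL'S, (h.congr hL'S).sup_span_singleton hBalt hBalt' ?_ fun u hu ↦ ?_⟩
  · rintro ⟨u, hu, huv⟩
    exact hv' ⟨u, hu, by rw [← hL'S u hu, huv, hL'v]⟩
  · rw [hL'v, hL'S u hu, hv'S u hu]

end IsIsometricOn

theorem IsIsometricOn.exists_extension {S : Submodule K V} {L : V →ₗ[K] V'}
    (h : IsIsometricOn B B' S L) (hdim : Module.finrank K V = Module.finrank K V')
    (hB : Function.Injective B) (hB' : Function.Injective B') (hBalt : B.IsAlt)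
    (hBalt' : B'.IsAlt) :
    ∃ L' : V →ₗ[K] V', (∀ u ∈ S, L' u = L u) ∧ ∀ u v, B' (L' u) (L' v) = B u v := by
  induction S using WellFoundedGT.induction generalizing L with
  | ind S ih =>
    by_cases hS : S = ⊤
    · subst hS
      exact ⟨L, fun _ _ ↦ rfl, fun u v ↦ h.apply_apply u trivial v trivial⟩
    obtain ⟨v, -, hv⟩ := SetLike.exists_of_lt (lt_top_iff_ne_top.2 hS)
    obtain ⟨L₁, hL₁, h₁⟩ := h.exists_extension_sup_span_singleton hdim hB hB' hBalt hBalt' hv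
    obtain ⟨L', hL', hiso⟩ := ih _ (Submodule.lt_sup_iff_notMem.2 hv) h₁
    exact ⟨L', fun u hu ↦ (hL' u (Submodule.mem_sup_left hu)).trans (hL₁ u hu), hiso⟩

end Witt

section RelativeDarboux

set_option maxSynthPendingDepth 3

variable {E : Type u} [NormedAddCommGroup E] [NormedSpace ℝ E]

/-- A germ at `0` of a symplectic form, with a globally smooth representative. Nondegeneracy is only
required at `0`, from where it propagates to a neighbourhood. -/
structure IsSymplecticAtZero (ω₀ : TwoForm E) : Prop where
  contDiff : ContDiff ℝ ∞ ω₀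
  isClosedAt : ∀ᶠ x in 𝓝 0, IsClosedAt ω₀ x
  injective : Function.Injective (ω₀ 0)

/-- Equality of algebraic restrictions to a germ at `0` of a set, given by the filter `l` of the
subsets of `E` containing it: the image of a curve germ `f` corresponds to `map f (𝓝 0)`. -/
def SameRestriction (l : Filter E) (ω₀ ω₁ : TwoForm E) : Prop :=
  ∃ (α : TwoForm E) (β : OneForm E), ContDiff ℝ ∞ α ∧ ContDiff ℝ ∞ β ∧ α =ᶠ[l] 0 ∧ β =ᶠ[l] 0 ∧
    ω₀ - ω₁ =ᶠ[𝓝 0] α + extDerivOne β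

/-- Some germ of a diffeomorphism which is the identity on the set germ `l` pulls `ω₁` back to `ω₀`.
That `Φ` is a local diffeomorphism is implied when `ω₀` is nondegenerate. -/
def RelSymplectomorphic (l : Filter E) (ω₀ ω₁ : TwoForm E) : Prop :=
  ∃ Φ : E → E, Φ 0 = 0 ∧ (∀ᶠ x in 𝓝 0, ContDiffAt ℝ ∞ Φ x) ∧ Φ =ᶠ[l] id ∧
    pullbackTwo Φ ω₁ =ᶠ[𝓝 0] ω₀

theorem contDiff_pullbackTwo {Θ : E → E} {α : TwoForm E} (hΘ : ContDiff ℝ ∞ Θ)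
    (hα : ContDiff ℝ ∞ α) : ContDiff ℝ ∞ (pullbackTwo Θ α) :=
  contDiff_iff_contDiffAt.2 fun _ ↦ contDiffAt_pullbackTwo hΘ.contDiffAt hα.contDiffAt

theorem pullbackTwo_congr {Θ : E → E} {α₁ α₂ : TwoForm E} {x : E} (h : α₁ (Θ x) = α₂ (Θ x)) :
    pullbackTwo Θ α₁ x = pullbackTwo Θ α₂ x := by simp only [pullbackTwo, h]

theorem pullbackTwo_id (α : TwoForm E) : pullbackTwo id α = α := by
  ext x u v
  simp [pullbackTwo_apply]

theorem pullbackTwo_clm_apply (L : E →L[ℝ] E) (α : TwoForm E) (x u v : E) :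
    pullbackTwo L α x u v = α (L x) (L u) (L v) := by
  rw [pullbackTwo_apply, L.fderiv]

theorem IsSymplecticAtZero.pullbackTwo {ω₀ : TwoForm E} {Θ : E → E} {Θ' : E →L[ℝ] E}
    (h : IsSymplecticAtZero ω₀) (hΘ : ContDiff ℝ ∞ Θ) (hΘ₀ : Θ 0 = 0)
    (hΘ' : HasFDerivAt Θ Θ' 0) (hbij : Function.Bijective Θ') :
    IsSymplecticAtZero (pullbackTwo Θ ω₀) where
  contDiff := contDiff_pullbackTwo hΘ h.contDiff
  isClosedAt := by
    filter_upwards [(hΘ.continuous.tendsto' 0 0 hΘ₀).eventually h.isClosedAt] with x hx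
    exact hx.pullbackTwo hΘ.contDiffAt
  injective u v huv := by
    refine hbij.1 (h.injective (ContinuousLinearMap.ext fun w ↦ ?_))
    obtain ⟨w, rfl⟩ := hbij.2 w
    simpa only [pullbackTwo_apply, hΘ₀, hΘ'.fderiv] using DFunLike.congr_fun huv w

theorem SameRestriction.trans {l : Filter E} {ω₀ ω₁ ω₂ : TwoForm E} (h : SameRestriction l ω₀ ω₁)
    (h' : SameRestriction l ω₁ ω₂) : SameRestriction l ω₀ ω₂ := by
  obtain ⟨α, β, hα, hβ, hαl, hβl, heq⟩ := h
  obtain ⟨α', β', hα', hβ', hαl', hβl', heq'⟩ := h'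
  refine ⟨α + α', β + β', hα.add hα', hβ.add hβ', by simpa using hαl.add hαl',
    by simpa using hβl.add hβl', ?_⟩
  filter_upwards [heq, heq'] with x hx hx'
  have hdβ := extDerivOne_add (hβ.differentiable (by simp) x) (hβ'.differentiable (by simp) x)
  simp only [Pi.sub_apply, Pi.add_apply] at hx hx' ⊢
  rw [hdβ, ← sub_add_sub_cancel, hx, hx', add_add_add_comm]

theorem SameRestriction.pullbackTwo {l : Filter E} {ω₀ ω₁ : TwoForm E} {Θ : E → E}
    (h : SameRestriction (map Θ l) ω₀ ω₁) (hΘ : ContDiff ℝ ∞ Θ) (hΘ₀ : Θ 0 = 0) :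
    SameRestriction l (pullbackTwo Θ ω₀) (pullbackTwo Θ ω₁) := by
  obtain ⟨α, β, hα, hβ, hαl, hβl, heq⟩ := h
  refine ⟨_root_.pullbackTwo Θ α, pullbackOne Θ β, contDiff_pullbackTwo hΘ hα,
    contDiff_iff_contDiffAt.2 fun _ ↦ contDiffAt_pullbackOne hΘ.contDiffAt hβ.contDiffAt,
    (eventually_map.1 hαl).mono fun x hx ↦ ?_, (eventually_map.1 hβl).mono fun x hx ↦ ?_, ?_⟩
  · ext u v
    simp [pullbackTwo_apply, hx]
  · ext u
    simp [pullbackOne, hx]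
  · filter_upwards [(hΘ.continuous.tendsto' 0 0 hΘ₀).eventually heq] with x hx
    ext u v
    simpa [extDerivOne_pullbackOne hΘ.contDiffAt hβ.contDiffAt, pullbackTwo_apply] using
      DFunLike.congr_fun (DFunLike.congr_fun hx (fderiv ℝ Θ x u)) (fderiv ℝ Θ x v)

theorem RelSymplectomorphic.trans {l : Filter E} {ω₀ ω₁ ω₂ : TwoForm E}
    (h : RelSymplectomorphic l ω₀ ω₁) (h' : RelSymplectomorphic l ω₁ ω₂) :
    RelSymplectomorphic l ω₀ ω₂ := by
  obtain ⟨Φ, hΦ₀, hΦ, hΦl, hpull⟩ := h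
  obtain ⟨Ψ, hΨ₀, hΨ, hΨl, hpull'⟩ := h'
  have hΦlim : Tendsto Φ (𝓝 0) (𝓝 0) := by
    simpa only [ContinuousAt, hΦ₀] using hΦ.self_of_nhds.continuousAt
  refine ⟨Ψ ∘ Φ, by simp [hΦ₀, hΨ₀], ?_, ?_, ?_⟩
  · filter_upwards [hΦ, hΦlim.eventually hΨ] with x hx hx' using hx'.comp x hx
  · filter_upwards [hΦl, hΨl] with x hx hx'
    simp only [Function.comp_apply, hx, id_eq, hx']
  · filter_upwards [hΦ, hΦlim.eventually hΨ, hpull, hΦlim.eventually hpull'] with x hx hx' hp hp'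
    rw [pullbackTwo_comp _ (hx'.differentiableAt (by simp)) (hx.differentiableAt (by simp)),
      pullbackTwo_congr hp', hp]

theorem RelSymplectomorphic.of_pullbackTwo {l : Filter E} {ω₀ ω₁ : TwoForm E} {Θ Ξ : E → E}
    (h : RelSymplectomorphic (map Θ l) (pullbackTwo Ξ ω₀) (pullbackTwo Ξ ω₁)) (hl : l ≤ 𝓝 0)
    (hΘ : ContDiff ℝ ∞ Θ) (hΘ₀ : Θ 0 = 0) (hΞ : ContDiff ℝ ∞ Ξ) (hΞ₀ : Ξ 0 = 0)
    (hΞΘ : Ξ ∘ Θ =ᶠ[𝓝 0] id) : RelSymplectomorphic l ω₀ ω₁ := by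
  obtain ⟨Φ, hΦ₀, hΦ, hΦl, hpull⟩ := h
  have hΘlim : Tendsto Θ (𝓝 0) (𝓝 0) := hΘ.continuous.tendsto' 0 0 hΘ₀
  refine ⟨Ξ ∘ Φ ∘ Θ, by simp [hΘ₀, hΦ₀, hΞ₀], ?_, ?_, ?_⟩
  · filter_upwards [hΘlim.eventually hΦ] with x hx
    exact hΞ.contDiffAt.comp x (hx.comp x hΘ.contDiffAt)
  · filter_upwards [hl hΞΘ, eventually_map.1 hΦl] with x hx hx'
    simpa only [Function.comp_apply, hx', id_eq] using hx
  · have hdiff {Ψ : E → E} (hΨ : ContDiff ℝ ∞ Ψ) (x : E) : DifferentiableAt ℝ Ψ x :=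
      hΨ.differentiable (by simp) x
    filter_upwards [hΘlim.eventually hΦ, hΘlim.eventually hpull, hΞΘ.eventuallyEq_nhds]
      with x hx hpx hxid
    have hΦx : DifferentiableAt ℝ Φ (Θ x) := hx.differentiableAt (by simp)
    calc pullbackTwo (Ξ ∘ Φ ∘ Θ) ω₁ x
        = pullbackTwo Θ (pullbackTwo Φ (pullbackTwo Ξ ω₁)) x := by
          rw [pullbackTwo_comp _ (hdiff hΞ _) (hΦx.comp x (hdiff hΘ x)),
            pullbackTwo_comp _ hΦx (hdiff hΘ x)]
      _ = pullbackTwo Θ (pullbackTwo Ξ ω₀) x := pullbackTwo_congr hpx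
      _ = pullbackTwo (Ξ ∘ Θ) ω₀ x := (pullbackTwo_comp _ (hdiff hΞ _) (hdiff hΘ x)).symm
      _ = pullbackTwo id ω₀ x := by simp only [pullbackTwo, hxid.fderiv_eq, hxid.self_of_nhds]
      _ = ω₀ x := by rw [pullbackTwo_id]

/-- A germ at `0` of a subset of `W`, given by the filter `l` of the sets containing it, which has
zero 1-jet relative to `W` and is contracted to `0` by a smooth family of linear maps. -/
structure IsQuasiHomogeneousGerm (l : Filter E) (W : Submodule ℝ E) : Prop where
  le_nhds : l ≤ 𝓝 0
  zero_mem : pure 0 ≤ l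
  eventually_mem : ∀ᶠ x in l, x ∈ W
  fderiv_eq_zero : ∀ c : E → ℝ, ContDiff ℝ ∞ c → (∀ᶠ x in l, c x = 0) →
    ∀ u ∈ W, fderiv ℝ c 0 u = 0
  exists_contraction : ∃ h : ℝ → E →L[ℝ] E, ContDiff ℝ ∞ h ∧ h 0 = 0 ∧ h 1 = .id ℝ E ∧
    ∀ p : E → Prop, (∀ᶠ x in l, p x) → ∀ᶠ x in l, ∀ s ∈ I, p (h s x)

theorem IsQuasiHomogeneousGerm.exists_primitive_of_eventually_eq_zero {l : Filter E}
    {W : Submodule ℝ E} (hl : IsQuasiHomogeneousGerm l W) {α : TwoForm E} (hα : ContDiff ℝ ∞ α)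
    (hclosed : ∀ᶠ x in 𝓝 0, IsClosedAt α x) (hαl : α =ᶠ[l] 0) :
    ∃ γ : OneForm E, ContDiff ℝ ∞ γ ∧ γ =ᶠ[l] 0 ∧ extDerivOne γ =ᶠ[𝓝 0] α := by
  obtain ⟨h, hh, hh₀, hh₁, hhl⟩ := hl.exists_contraction
  refine ⟨homotopyOperator α h, contDiff_homotopyOperator hα hh, ?_, ?_⟩
  · filter_upwards [hhl _ hαl] with x hx
    exact homotopyOperator_eq_zero fun s hs ↦ by simp [hx s hs]
  · filter_upwards [extDerivOne_homotopyOperator hα hh hclosed] with x hx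
    ext u v
    simp only [hx, Pi.sub_apply, sub_apply, pullbackTwo_clm_apply]
    simp [hh₀, hh₁]

theorem exists_primitive_of_restrict_eq_zero [FiniteDimensional ℝ E] {W : Submodule ℝ E}
    {α : TwoForm E} (hα : ContDiff ℝ ∞ α) (hclosed : ∀ᶠ x in 𝓝 0, IsClosedAt α x)
    (hαW : ∀ x ∈ W, ∀ u ∈ W, ∀ v ∈ W, α x u v = 0) :
    ∃ γ : OneForm E, ContDiff ℝ ∞ γ ∧ (∀ x ∈ W, γ x = 0) ∧ extDerivOne γ =ᶠ[𝓝 0] α := by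
  obtain ⟨p, hpW, hpx⟩ : ∃ p : E →L[ℝ] E, (∀ x, p x ∈ W) ∧ ∀ x ∈ W, p x = x := by
    obtain ⟨π, hπ⟩ := W.exists_isCompl
    exact ⟨LinearMap.toContinuousLinearMap (W.projection π hπ), W.projection_apply_mem hπ,
      fun x hx ↦ W.projection_apply_left hπ ⟨x, hx⟩⟩
  obtain ⟨h, hh, hh₀, hh₁, hh'⟩ : ∃ h : ℝ → E →L[ℝ] E, ContDiff ℝ ∞ h ∧ h 0 = p ∧
      h 1 = .id ℝ E ∧ ∀ s, deriv h s = .id ℝ E - p :=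
    ⟨AffineMap.lineMap p (.id ℝ E), AffineMap.contDiff_lineMap _ _, by simp, by simp,
      fun s ↦ AffineMap.hasDerivAt_lineMap.deriv⟩
  refine ⟨homotopyOperator α h, contDiff_homotopyOperator hα hh, fun x hx ↦ ?_, ?_⟩
  · exact homotopyOperator_eq_zero fun s _ ↦ by simp [hh', hpx x hx]
  · filter_upwards [extDerivOne_homotopyOperator hα hh hclosed] with x hx
    ext u v
    simp only [hx, Pi.sub_apply, sub_apply, pullbackTwo_clm_apply, hh₀, hh₁,
      hαW _ (hpW x) _ (hpW u) _ (hpW v), ContinuousLinearMap.id_apply, sub_zero]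

namespace IsQuasiHomogeneousGerm

variable {l : Filter E} {W : Submodule ℝ E} {ω₀ ω₁ : TwoForm E}

theorem fderiv_oneForm_eq_zero (hl : IsQuasiHomogeneousGerm l W) {β : OneForm E}
    (hβ : ContDiff ℝ ∞ β) (hβl : β =ᶠ[l] 0) {u : E} (hu : u ∈ W) : fderiv ℝ β 0 u = 0 := by
  ext v
  rw [← fderiv_clm_apply_const (hβ.differentiable (by simp) 0)]
  exact hl.fderiv_eq_zero _ (hβ.clm_apply contDiff_const) (hβl.mono fun x hx ↦ by simp [hx]) u hu

theorem restrict_eq_of_sameRestriction (hl : IsQuasiHomogeneousGerm l W)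
    (h : SameRestriction l ω₀ ω₁) {u v : E} (hu : u ∈ W) (hv : v ∈ W) :
    ω₀ 0 u v = ω₁ 0 u v := by
  obtain ⟨α, β, -, hβ, hαl, hβl, heq⟩ := h
  have hα₀ : α 0 = 0 := eventually_pure.1 (hl.zero_mem hαl)
  have := DFunLike.congr_fun (DFunLike.congr_fun heq.self_of_nhds u) v
  rw [← sub_eq_zero]
  simpa [hα₀, extDerivOne_apply, hl.fderiv_oneForm_eq_zero hβ hβl hu,
    hl.fderiv_oneForm_eq_zero hβ hβl hv] using this

theorem exists_primitive_of_sameRestriction (hl : IsQuasiHomogeneousGerm l W)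
    (h : SameRestriction l ω₀ ω₁) (hclosed₀ : ∀ᶠ x in 𝓝 0, IsClosedAt ω₀ x)
    (hclosed₁ : ∀ᶠ x in 𝓝 0, IsClosedAt ω₁ x) :
    ∃ γ : OneForm E, ContDiff ℝ ∞ γ ∧ γ =ᶠ[l] 0 ∧ extDerivOne γ =ᶠ[𝓝 0] ω₀ - ω₁ := by
  obtain ⟨α, β, hα, hβ, hαl, hβl, heq⟩ := h
  have hclosed : ∀ᶠ x in 𝓝 0, IsClosedAt α x := by
    filter_upwards [hclosed₀, hclosed₁, heq.eventuallyEq_nhds] with x h₀ h₁ hx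
    refine ((h₀.sub h₁).sub (isClosedAt_extDerivOne hβ.contDiffAt)).congr_of_eventuallyEq ?_
    filter_upwards [hx] with y hy
    simp only [Pi.sub_apply, Pi.add_apply] at hy ⊢
    rw [hy, add_sub_cancel_right]
  obtain ⟨γ, hγ, hγl, hdγ⟩ := hl.exists_primitive_of_eventually_eq_zero hα hclosed hαl
  refine ⟨γ + β, hγ.add hβ, by simpa using hγl.add hβl, ?_⟩
  filter_upwards [hdγ, heq] with x hx heqx
  rw [extDerivOne_add (hγ.differentiable (by simp) x) (hβ.differentiable (by simp) x), hx, heqx,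
    Pi.add_apply]

-- The primitive `γ` of `ω₀ - ω₁` may be corrected by the closed 1-form `x ↦ fderiv ℝ γ 0 x`.
theorem exists_flat_primitive (hl : IsQuasiHomogeneousGerm l W) {γ : OneForm E}
    (hγ : ContDiff ℝ ∞ γ) (hγl : γ =ᶠ[l] 0) (hdγ : extDerivOne γ 0 = 0) :
    ∃ δ : OneForm E, ContDiff ℝ ∞ δ ∧ δ =ᶠ[l] 0 ∧ fderiv ℝ δ 0 = 0 ∧
      ∀ x, extDerivOne δ x = extDerivOne γ x := by
  have hδ (x : E) : HasFDerivAt (γ - ⇑(fderiv ℝ γ 0)) (fderiv ℝ γ x - fderiv ℝ γ 0) x :=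
    (hγ.differentiable (by simp) x).hasFDerivAt.sub (fderiv ℝ γ 0).hasFDerivAt
  refine ⟨γ - ⇑(fderiv ℝ γ 0), hγ.sub (fderiv ℝ γ 0).contDiff, ?_, by rw [(hδ 0).fderiv, sub_self],
    fun x ↦ ?_⟩
  · filter_upwards [hγl, hl.eventually_mem] with x hx hxW
    simp [hx, hl.fderiv_oneForm_eq_zero hγ hγl hxW]
  · ext u v
    have hsymm := DFunLike.congr_fun (DFunLike.congr_fun hdγ u) v
    simp only [extDerivOne_apply, zero_apply, (hδ x).fderiv, sub_apply] at hsymm ⊢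
    linear_combination -hsymm

variable [FiniteDimensional ℝ E]

theorem relSymplectomorphic_of_apply_zero_eq (hl : IsQuasiHomogeneousGerm l W)
    (hω₀ : IsSymplecticAtZero ω₀) (hω₁ : IsSymplecticAtZero ω₁) (h : SameRestriction l ω₀ ω₁)
    (heq : ω₀ 0 = ω₁ 0) : RelSymplectomorphic l ω₀ ω₁ := by
  obtain ⟨γ, hγ, hγl, hdγ⟩ :=
    hl.exists_primitive_of_sameRestriction h hω₀.isClosedAt hω₁.isClosedAt
  obtain ⟨δ, hδ, hδl, hδ', hdδ⟩ := hl.exists_flat_primitive hγ hγl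
    (hdγ.self_of_nhds.trans (sub_eq_zero.2 heq))
  have hδ₀ : δ 0 = 0 := eventually_pure.1 (hl.zero_mem hδl)
  obtain ⟨Φ, hΦ, hfix, hpull⟩ := exists_moser_isotopy hω₀.contDiff hω₁.contDiff hδ
    hω₀.isClosedAt hω₁.isClosedAt heq hω₀.injective hδ₀ hδ'
    (hdγ.symm.trans (.of_forall fun x ↦ (hdδ x).symm))
  refine ⟨Φ, hfix.self_of_nhds hδ₀, hΦ, ?_, hpull⟩
  filter_upwards [hl.le_nhds hfix, hδl] with x hx hδx using hx hδx

theorem exists_linear_correction (hl : IsQuasiHomogeneousGerm l W)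
    (hω₀ : IsSymplecticAtZero ω₀) (hω₁ : IsSymplecticAtZero ω₁) (h : SameRestriction l ω₀ ω₁) :
    ∃ L : E →L[ℝ] E, (∀ x ∈ W, L x = x) ∧ ∀ u v, ω₁ 0 (L u) (L v) = ω₀ 0 u v := by
  let toBilin (A : E →L[ℝ] E →L[ℝ] ℝ) : LinearMap.BilinForm ℝ E := A.toLinearMap₁₂
  have hinj {A : E →L[ℝ] E →L[ℝ] ℝ} (hA : Function.Injective A) :
      Function.Injective (toBilin A) := fun u v huv ↦
    hA (ContinuousLinearMap.ext fun w ↦ LinearMap.congr_fun huv w)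
  have halt {A : TwoForm E} (hA : IsClosedAt A 0) : (toBilin (A 0)).IsAlt := fun u ↦
    self_eq_neg.1 (hA.antisymm u u)
  have hid : IsIsometricOn (toBilin (ω₀ 0)) (toBilin (ω₁ 0)) W LinearMap.id :=
    ⟨injOn_id _, fun u hu v hv ↦ (hl.restrict_eq_of_sameRestriction h hu hv).symm⟩
  obtain ⟨L, hLW, hL⟩ := hid.exists_extension rfl (hinj hω₀.injective) (hinj hω₁.injective)
    (halt hω₀.isClosedAt.self_of_nhds) (halt hω₁.isClosedAt.self_of_nhds)
  exact ⟨LinearMap.toContinuousLinearMap L, hLW, hL⟩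

theorem sameRestriction_pullbackTwo_clm (hl : IsQuasiHomogeneousGerm l W)
    (hω₁ : ContDiff ℝ ∞ ω₁) (hclosed : ∀ᶠ x in 𝓝 0, IsClosedAt ω₁ x) {L : E →L[ℝ] E}
    (hLW : ∀ x ∈ W, L x = x) : SameRestriction l ω₁ (pullbackTwo L ω₁) := by
  have hclosed' : ∀ᶠ x in 𝓝 0, IsClosedAt (ω₁ - pullbackTwo L ω₁) x := by
    filter_upwards [hclosed, (L.continuous.tendsto' 0 0 (map_zero L)).eventually hclosed]
      with x hx hLx using hx.sub (hLx.pullbackTwo L.contDiff.contDiffAt)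
  obtain ⟨γ, hγ, hγW, hdγ⟩ := exists_primitive_of_restrict_eq_zero (W := W)
    (α := ω₁ - pullbackTwo L ω₁)
    (hω₁.sub (contDiff_pullbackTwo L.contDiff hω₁)) hclosed' fun x hx u hu v hv ↦ by
      rw [Pi.sub_apply, sub_apply, sub_apply, pullbackTwo_clm_apply, hLW x hx, hLW u hu, hLW v hv,
        sub_self]
  refine ⟨0, γ, contDiff_const, hγ, .rfl, hl.eventually_mem.mono hγW, ?_⟩
  simpa only [zero_add] using hdγ.symm

theorem relSymplectomorphic (hl : IsQuasiHomogeneousGerm l W) (hω₀ : IsSymplecticAtZero ω₀)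
    (hω₁ : IsSymplecticAtZero ω₁) (h : SameRestriction l ω₀ ω₁) :
    RelSymplectomorphic l ω₀ ω₁ := by
  obtain ⟨L, hLW, hL⟩ := hl.exists_linear_correction hω₀ hω₁ h
  have hLinj : Function.Injective L := (injective_iff_map_eq_zero L).2 fun u hu ↦
    hω₀.injective (ContinuousLinearMap.ext fun v ↦ by simp [← hL, hu])
  have hωL : IsSymplecticAtZero (pullbackTwo L ω₁) := hω₁.pullbackTwo L.contDiff (map_zero L)
    L.hasFDerivAt ⟨hLinj, LinearMap.injective_iff_surjective.1 hLinj⟩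
  have heq : ω₀ 0 = pullbackTwo L ω₁ 0 := by
    ext u v
    rw [pullbackTwo_clm_apply, map_zero, hL]
  have hL_rel : RelSymplectomorphic l (pullbackTwo L ω₁) ω₁ :=
    ⟨L, map_zero L, .of_forall fun x ↦ L.contDiff.contDiffAt, hl.eventually_mem.mono hLW, .rfl⟩
  exact (hl.relSymplectomorphic_of_apply_zero_eq hω₀ hωL
    (h.trans (hl.sameRestriction_pullbackTwo_clm hω₁.contDiff hω₁.isClosedAt hLW)) heq).trans hL_rel

theorem relSymplectomorphic_of_map {Ψ : E → E} {Ψ' : E ≃L[ℝ] E} (hl : l ≤ 𝓝 0)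
    (hΨ : ∀ᶠ x in 𝓝 0, ContDiffAt ℝ ∞ Ψ x) (hΨ₀ : Ψ 0 = 0) (hΨ' : HasFDerivAt Ψ (Ψ' : E →L[ℝ] E) 0)
    (hΨl : IsQuasiHomogeneousGerm (map Ψ l) W) (hω₀ : IsSymplecticAtZero ω₀)
    (hω₁ : IsSymplecticAtZero ω₁) (h : SameRestriction l ω₀ ω₁) :
    RelSymplectomorphic l ω₀ ω₁ := by
  obtain ⟨ξ, hξ₀, hξ, hΨξ, hξΨ⟩ := exists_smooth_localInverse hΨ hΨ'
  rw [hΨ₀] at hξ₀ hξ hΨξ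
  obtain ⟨Θ, hΘ, hΘΨ⟩ := exists_contDiff_eventuallyEq hΨ
  obtain ⟨Ξ, hΞ, hΞξ⟩ := exists_contDiff_eventuallyEq hξ
  have hΘ₀ : Θ 0 = 0 := hΘΨ.self_of_nhds.trans hΨ₀
  have hΞ₀ : Ξ 0 = 0 := hΞξ.self_of_nhds.trans hξ₀
  have hΞΘ : Ξ ∘ Θ =ᶠ[𝓝 0] id := by
    filter_upwards [hΘΨ, (hΘ.continuous.tendsto' 0 0 hΘ₀).eventually hΞξ, hξΨ] with x hx hx' hx''
    rw [Function.comp_apply, hx', hx, hx'', id_eq]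
  have hΞ' : HasFDerivAt Ξ (Ψ'.symm : E →L[ℝ] E) 0 :=
    (HasFDerivAt.of_local_left_inverse hξ.self_of_nhds.continuousAt (hξ₀.symm ▸ hΨ')
      hΨξ).congr_of_eventuallyEq hΞξ
  have hΨΘl : map Θ l = map Ψ l := Filter.map_congr (hl hΘΨ)
  have hΞΨl : map Ξ (map Ψ l) = l := by
    rw [← hΨΘl, map_map, Filter.map_congr (hl hΞΘ), map_id]
  refine RelSymplectomorphic.of_pullbackTwo ?_ hl hΘ hΘ₀ hΞ hΞ₀ hΞΘ
  rw [hΨΘl]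
  exact hΨl.relSymplectomorphic (hω₀.pullbackTwo hΞ hΞ₀ hΞ' Ψ'.symm.bijective)
    (hω₁.pullbackTwo hΞ hΞ₀ hΞ' Ψ'.symm.bijective) (.pullbackTwo (hΞΨl.symm ▸ h) hΞ hΞ₀)

end IsQuasiHomogeneousGerm

end RelativeDarboux

section MonomialCurves

set_option maxSynthPendingDepth 3

variable {E : Type u} [NormedAddCommGroup E] [NormedSpace ℝ E] {k : ℕ}

theorem iteratedDeriv_pow_mul_zero {H : ℝ → ℝ} {M : ℕ} (hH : ContDiffAt ℝ M H 0) (N : ℕ) :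
    iteratedDeriv M (fun t ↦ t ^ N * H t) 0 = M.descFactorial N * iteratedDeriv (M - N) H 0 := by
  rw [iteratedDeriv_fun_mul (contDiffAt_fun_id.pow N) hH]
  simp only [iteratedDeriv_fun_pow_zero]
  rcases le_or_gt N M with hNM | hMN
  · rw [Finset.sum_eq_single_of_mem N (Finset.mem_range_succ_iff.2 hNM) fun i _ hi ↦ by simp [hi],
      Nat.descFactorial_eq_factorial_mul_choose]
    push_cast
    rw [if_pos rfl]
    ring
  · rw [Nat.descFactorial_eq_zero_iff_lt.2 hMN, Nat.cast_zero, zero_mul]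
    refine Finset.sum_eq_zero fun i hi ↦ ?_
    rw [if_neg ((Finset.mem_range_succ_iff.1 hi).trans_lt hMN).ne, Nat.cast_zero, mul_zero,
      zero_mul]

/-- The curve with components `t ^ μ j` along the vectors `b j`. -/
def monomialCurve (b : Fin k → E) (μ : Fin k → ℕ) (t : ℝ) : E := ∑ j, t ^ μ j • b j

variable {b : Fin k → E} {μ : Fin k → ℕ}

theorem contDiff_monomialCurve : ContDiff ℝ ∞ (monomialCurve b μ) :=
  ContDiff.sum fun j _ ↦ (contDiff_id.pow (μ j)).smul contDiff_const

theorem monomialCurve_zero (hμ : ∀ j, 0 < μ j) : monomialCurve b μ 0 = 0 :=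
  Finset.sum_eq_zero fun j _ ↦ by rw [zero_pow (hμ j).ne', zero_smul]

theorem exists_iteratedDeriv_comp_monomialCurve {c : E → ℝ} (hc : ContDiff ℝ ∞ c) :
    ∃ C : E → E →L[ℝ] ℝ, ContDiff ℝ ∞ C ∧ C 0 = fderiv ℝ c 0 ∧ ∀ M, 0 < M →
      iteratedDeriv M (fun t ↦ c (monomialCurve b μ t)) 0 = ∑ j, M.descFactorial (μ j) *
        iteratedDeriv (M - μ j) (fun t ↦ C (monomialCurve b μ t) (b j)) 0 := by
  obtain ⟨C, hC, hcC, hC₀⟩ := exists_contDiff_eq_add_apply_self hc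
  refine ⟨C, hC, hC₀, fun M hM ↦ ?_⟩
  have hCb (j : Fin k) : ContDiff ℝ ∞ fun t ↦ C (monomialCurve b μ t) (b j) :=
    (hC.comp contDiff_monomialCurve).clm_apply contDiff_const
  have hexpand : (fun t ↦ c (monomialCurve b μ t)) =
      fun t ↦ c 0 + ∑ j, t ^ μ j * C (monomialCurve b μ t) (b j) := by
    ext t
    rw [hcC]
    nth_rw 2 [monomialCurve]
    simp only [map_sum, map_smul, smul_eq_mul]
  rw [hexpand, iteratedDeriv_const_add hM, iteratedDeriv_fun_sum fun j _ ↦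
    (((contDiff_fun_id.pow (μ j)).mul (hCb j)).of_le (by exact_mod_cast le_top)).contDiffAt]
  exact Finset.sum_congr rfl fun j _ ↦
    iteratedDeriv_pow_mul_zero ((hCb j).of_le (by exact_mod_cast le_top)).contDiffAt _

theorem iteratedDeriv_comp_monomialCurve_eq_zero (hμ : ∀ j, 0 < μ j) {M : ℕ}
    (hM : M ∉ Submodule.span ℕ (range μ)) {c : E → ℝ} (hc : ContDiff ℝ ∞ c) :
    iteratedDeriv M (fun t ↦ c (monomialCurve b μ t)) 0 = 0 := by
  induction M using Nat.strong_induction_on generalizing c with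
  | _ M ih =>
    have hM₀ : 0 < M := Nat.pos_of_ne_zero fun h ↦ hM (h ▸ Submodule.zero_mem _)
    obtain ⟨C, hC, -, hexpand⟩ := exists_iteratedDeriv_comp_monomialCurve hc
    rw [hexpand M hM₀]
    refine Finset.sum_eq_zero fun j _ ↦ ?_
    rcases le_or_gt (μ j) M with hle | hlt
    · have hsub : M - μ j ∉ Submodule.span ℕ (range μ) := fun h ↦ hM <| by
        simpa only [Nat.sub_add_cancel hle] using
          Submodule.add_mem _ h (Submodule.subset_span (mem_range_self j))
      rw [ih _ (Nat.sub_lt hM₀ (hμ j)) hsub (hC.clm_apply contDiff_const), mul_zero]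
    · rw [Nat.descFactorial_eq_zero_iff_lt.2 hlt, Nat.cast_zero, zero_mul]

theorem LinIndepNonneg.sub_notMem_span (h : LinIndepNonneg μ) (hμ : ∀ j, 0 < μ j) {i j : Fin k}
    (hij : i ≠ j) (hle : μ j ≤ μ i) : μ i - μ j ∉ Submodule.span ℕ (range μ) := by
  rw [Submodule.mem_span_range_iff_exists_fun]
  rintro ⟨c, hc⟩
  simp only [smul_eq_mul] at hc
  have hci : c i = 0 := by
    by_contra hne
    have hci_le : c i * μ i ≤ ∑ l, c l * μ l :=
      Finset.single_le_sum (f := fun l ↦ c l * μ l) (fun _ _ ↦ Nat.zero_le _) (Finset.mem_univ i)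
    have := Nat.le_mul_of_pos_left (μ i) (Nat.pos_of_ne_zero hne)
    have := hμ j
    omega
  refine h i (c + Pi.single j 1) ?_
  have hsum := Finset.add_sum_erase _ (fun l ↦ c l * μ l) (Finset.mem_univ i)
  simp only [hci, zero_mul, zero_add] at hsum
  simp only [Pi.add_apply, add_mul, Finset.sum_add_distrib, hsum, hc, Pi.single_apply, ite_mul,
    one_mul, zero_mul, Finset.sum_ite_eq', Finset.mem_erase, Finset.mem_univ, and_true, hij.symm,
    ne_eq, not_false_eq_true, if_true, Nat.sub_add_cancel hle]

theorem fderiv_eq_zero_of_comp_monomialCurve_eq_zero (hμ : ∀ j, 0 < μ j) (h : LinIndepNonneg μ)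
    {c : E → ℝ} (hc : ContDiff ℝ ∞ c) (h₀ : ∀ᶠ t in 𝓝 0, c (monomialCurve b μ t) = 0)
    (i : Fin k) : fderiv ℝ c 0 (b i) = 0 := by
  obtain ⟨C, hC, hC₀, hexpand⟩ := exists_iteratedDeriv_comp_monomialCurve (b := b) hc
  have hzero : iteratedDeriv (μ i) (fun t ↦ c (monomialCurve b μ t)) 0 = 0 := by
    rw [EventuallyEq.iteratedDeriv_eq (g := fun _ ↦ (0 : ℝ)) _ h₀, iteratedDeriv_fun_const_zero]
  rw [hexpand _ (hμ i), Finset.sum_eq_single_of_mem i (Finset.mem_univ i)] at hzero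
  · simpa [monomialCurve_zero hμ, hC₀, Nat.descFactorial_self, Nat.factorial_ne_zero] using hzero
  · intro j _ hji
    rcases le_or_gt (μ j) (μ i) with hle | hlt
    · rw [iteratedDeriv_comp_monomialCurve_eq_zero hμ (h.sub_notMem_span hμ hji.symm hle)
        (hC.clm_apply contDiff_const), mul_zero]
    · rw [Nat.descFactorial_eq_zero_iff_lt.2 hlt, Nat.cast_zero, zero_mul]

theorem exists_contraction_monomialCurve [FiniteDimensional ℝ E] (hb : LinearIndependent ℝ b)
    (hμ : ∀ j, 0 < μ j) :
    ∃ h : ℝ → E →L[ℝ] E, ContDiff ℝ ∞ h ∧ h 0 = 0 ∧ h 1 = .id ℝ E ∧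
      ∀ s t, h s (monomialCurve b μ t) = monomialCurve b μ (s * t) := by
  obtain ⟨p, hp⟩ := LinearMap.exists_leftInverse_of_injective (Fintype.linearCombination ℝ b)
    (LinearMap.ker_eq_bot.2 hb.fintypeLinearCombination_injective)
  let q (j : Fin k) : E →L[ℝ] E :=
    (LinearMap.toContinuousLinearMap (LinearMap.proj j ∘ₗ p)).smulRight (b j)
  have hq (i j : Fin k) : q j (b i) = if i = j then b i else 0 := by
    have hpb : p (b i) = Pi.single i 1 := by
      simpa using LinearMap.congr_fun hp (Pi.single i 1)
    rcases eq_or_ne i j with rfl | hij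
    · simp [q, hpb]
    · simp [q, hpb, hij, hij.symm]
  refine ⟨fun s ↦ ∑ j, s ^ μ j • q j + s • (.id ℝ E - ∑ j, q j), ?_, ?_, ?_, fun s t ↦ ?_⟩
  · exact (ContDiff.sum fun j _ ↦ (contDiff_id.pow (μ j)).smul contDiff_const).add
      (contDiff_id.smul contDiff_const)
  · simp [(hμ _).ne']
  · simp
  · simp only [monomialCurve, map_sum, map_smul, add_apply, smul_apply, sub_apply,
      sum_apply, hq, ContinuousLinearMap.id_apply, Finset.sum_ite_eq,
      Finset.mem_univ, if_true, sub_self, smul_zero, add_zero, smul_ite]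
    simp only [smul_smul, mul_pow, mul_comm]

theorem isQuasiHomogeneousGerm_monomialCurve [FiniteDimensional ℝ E] (hb : LinearIndependent ℝ b)
    (hμ : ∀ j, 0 < μ j) (h : LinIndepNonneg μ) :
    IsQuasiHomogeneousGerm (map (monomialCurve b μ) (𝓝 0)) (Submodule.span ℝ (range b)) where
  le_nhds := contDiff_monomialCurve.continuous.tendsto' 0 0 (monomialCurve_zero hμ)
  zero_mem := by
    have h₀ := map_mono (m := monomialCurve b μ) (pure_le_nhds 0)
    rwa [Filter.map_pure, monomialCurve_zero hμ] at h₀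
  eventually_mem := eventually_map.2 <| .of_forall fun t ↦ Submodule.sum_mem _ fun j _ ↦
    Submodule.smul_mem _ _ (Submodule.subset_span (mem_range_self j))
  fderiv_eq_zero c hc h₀ u hu := by
    have hle : Submodule.span ℝ (range b) ≤ LinearMap.ker (fderiv ℝ c 0 : E →ₗ[ℝ] ℝ) :=
      Submodule.span_le.2 <| range_subset_iff.2
        (fderiv_eq_zero_of_comp_monomialCurve_eq_zero hμ h hc (eventually_map.1 h₀))
    exact hle hu
  exists_contraction := by
    obtain ⟨H, hH, hH₀, hH₁, hHb⟩ := exists_contraction_monomialCurve hb hμ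
    refine ⟨H, hH, hH₀, hH₁, fun p hp ↦ ?_⟩
    obtain ⟨ε, hε, hball⟩ := Metric.eventually_nhds_iff.1 (eventually_map.1 hp)
    refine eventually_map.2 (Metric.eventually_nhds_iff.2 ⟨ε, hε, fun t ht s hs ↦ ?_⟩)
    rw [hHb]
    refine hball ?_
    rw [dist_zero_right, norm_mul, Real.norm_of_nonneg hs.1] at *
    exact (mul_le_of_le_one_left (norm_nonneg t) hs.2).trans_lt (by simpa using ht)

end MonomialCurves

section CoordinateForms

set_option maxSynthPendingDepth 3

variable {m : ℕ}

theorem eventually_contDiffAt_of_contDiffOn {E F : Type*} [NormedAddCommGroup E] [NormedSpace ℝ E]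
    [NormedAddCommGroup F] [NormedSpace ℝ F] {f : E → F} {a : E}
    (h : ∃ U ∈ 𝓝 a, ContDiffOn ℝ ∞ f U) : ∀ᶠ x in 𝓝 a, ContDiffAt ℝ ∞ f x := by
  obtain ⟨U, hU, hf⟩ := h
  exact (eventually_mem_nhds_iff.2 hU).mono fun x hx ↦ hf.contDiffAt hx

theorem eventually_contDiffAt_toContinuousLinearMap {E V F : Type*} [NormedAddCommGroup E]
    [NormedSpace ℝ E] [NormedAddCommGroup V] [NormedSpace ℝ V] [FiniteDimensional ℝ V]
    [NormedAddCommGroup F] [NormedSpace ℝ F] {L : E → V →ₗ[ℝ] F} {a : E}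
    (hL : ∀ v, ∀ᶠ x in 𝓝 a, ContDiffAt ℝ ∞ (fun y ↦ L y v) x) :
    ∀ᶠ x in 𝓝 a, ContDiffAt ℝ ∞ (fun y ↦ LinearMap.toContinuousLinearMap (L y)) x := by
  let b := Module.finBasis ℝ V
  have hexpand (y : E) : LinearMap.toContinuousLinearMap (L y) =
      ∑ i, (LinearMap.toContinuousLinearMap (b.coord i)).smulRight (L y (b i)) := by
    ext v
    simpa [-Module.Basis.sum_repr] using congrArg (L y) (b.sum_repr v).symm
  filter_upwards [eventually_all.2 fun i ↦ hL (b i)] with x hx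
  simp only [hexpand]
  exact ContDiffAt.sum fun i _ ↦ contDiffAt_const.smulRight (hx i)

theorem isLinearMap_of_map_add_smul {V : Type*} [AddCommGroup V] [Module ℝ V] {φ : V → ℝ}
    (h : ∀ u v (c : ℝ), φ (u + c • v) = φ u + c * φ v) : IsLinearMap ℝ φ where
  map_add u v := by simpa using h u v 1
  map_smul c v := by
    have h₀ : φ 0 = 0 := by simpa using h 0 0 1
    simpa [h₀] using h 0 v c

theorem IsForm1.exists_oneForm {β : Form1 m} (h : IsForm1 m β) :
    ∃ b : OneForm (Fin m → ℝ), ContDiff ℝ ∞ b ∧ ∀ᶠ x in 𝓝 0, ∀ u, b x u = β x u := by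
  obtain ⟨hlin, hsmooth⟩ := h
  obtain ⟨b, hb, heq⟩ := exists_contDiff_eventuallyEq <|
    eventually_contDiffAt_toContinuousLinearMap (a := 0)
      (L := fun x ↦ (isLinearMap_of_map_add_smul (hlin x)).mk' (β x))
      fun u ↦ eventually_contDiffAt_of_contDiffOn (hsmooth u)
  exact ⟨b, hb, heq.mono fun x hx u ↦ by rw [hx]; rfl⟩

theorem IsForm2.exists_twoForm {α : Form2 m} (h : IsForm2 m α) :
    ∃ a : TwoForm (Fin m → ℝ), ContDiff ℝ ∞ a ∧ ∀ᶠ x in 𝓝 0, ∀ u v, a x u v = α x u v := by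
  obtain ⟨hlin, halt, hsmooth⟩ := h
  have hlin₁ (x v) : IsLinearMap ℝ fun u ↦ α x u v :=
    isLinearMap_of_map_add_smul fun u₁ u₂ c ↦ hlin x u₁ u₂ v c
  have hlin₂ (x u) : IsLinearMap ℝ (α x u) :=
    isLinearMap_of_map_add_smul fun v₁ v₂ c ↦ by
      rw [halt x u, hlin, halt x u v₁, halt x u v₂]
      ring
  let L (x : Fin m → ℝ) : (Fin m → ℝ) →ₗ[ℝ] (Fin m → ℝ) →L[ℝ] ℝ :=
    LinearMap.toContinuousLinearMap.toLinearMap ∘ₗ LinearMap.mk₂ ℝ (α x)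
      (fun u₁ u₂ v ↦ (hlin₁ x v).map_add u₁ u₂) (fun c u v ↦ (hlin₁ x v).map_smul c u)
      (fun u ↦ (hlin₂ x u).map_add) (fun c u ↦ (hlin₂ x u).map_smul c)
  obtain ⟨a, ha, heq⟩ := exists_contDiff_eventuallyEq <|
    eventually_contDiffAt_toContinuousLinearMap (a := 0) (L := L) fun u ↦
      eventually_contDiffAt_toContinuousLinearMap fun v ↦
        eventually_contDiffAt_of_contDiffOn (hsmooth u v)
  exact ⟨a, ha, heq.mono fun x hx u v ↦ by rw [hx]; rfl⟩

theorem extD1_eq_extDerivOne {β : Form1 m} {b : OneForm (Fin m → ℝ)} {x : Fin m → ℝ}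
    (hb : DifferentiableAt ℝ b x) (heq : ∀ᶠ y in 𝓝 x, ∀ u, b y u = β y u) (u v : Fin m → ℝ) :
    extD1 m β x u v = extDerivOne b x u v := by
  have hβ (v : Fin m → ℝ) : fderiv ℝ (fun y ↦ β y v) x = fderiv ℝ (fun y ↦ b y v) x :=
    EventuallyEq.fderiv_eq (heq.mono fun y hy ↦ (hy v).symm)
  simp only [extD1, hβ, fderiv_clm_apply_const hb, extDerivOne_apply]

theorem isClosedAt_of_extD2_eq_zero {α : Form2 m} {a : TwoForm (Fin m → ℝ)} {x : Fin m → ℝ}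
    (hα : IsForm2 m α) (ha : ContDiffAt ℝ ∞ a x) (heq : ∀ᶠ y in 𝓝 x, ∀ u v, a y u v = α y u v)
    (hclosed : ∀ u v w, extD2 m α x u v w = 0) : IsClosedAt a x where
  contDiffAt := ha
  antisymm u v := by rw [heq.self_of_nhds, heq.self_of_nhds, hα.2.1]
  cyclic u v w := by
    have hderiv (u v w : Fin m → ℝ) : fderiv ℝ (fun y ↦ α y v w) x u = fderiv ℝ a x u v w := by
      have hα_eq : (fun y ↦ α y v w) =ᶠ[𝓝 x] fun y ↦ a y v w := heq.mono fun y hy ↦ (hy v w).symm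
      have had : DifferentiableAt ℝ a x := ha.differentiableAt (by simp)
      rw [hα_eq.fderiv_eq, fderiv_clm_apply_const (had.clm_apply (differentiableAt_const v)),
        fderiv_clm_apply_const had]
    simpa only [extD2, hderiv] using hclosed u v w

theorem IsSymplecticGerm.exists_isSymplecticAtZero {ω₀ : Form2 m} (h : IsSymplecticGerm m ω₀) :
    ∃ w : TwoForm (Fin m → ℝ), IsSymplecticAtZero w ∧ ∀ᶠ x in 𝓝 0, ∀ u v, w x u v = ω₀ x u v := by
  obtain ⟨hform, hclosed, hnondeg⟩ := h
  obtain ⟨w, hw, heq⟩ := hform.exists_twoForm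
  refine ⟨w, ⟨hw, ?_, (injective_iff_map_eq_zero _).2 fun u hu ↦
    hnondeg.self_of_nhds u fun v ↦ ?_⟩, heq⟩
  · filter_upwards [eventually_eventually_nhds.2 heq, hclosed] with x hx hcx
    exact isClosedAt_of_extD2_eq_zero hform hw.contDiffAt hx hcx
  · rw [← heq.self_of_nhds, hu, zero_apply]

theorem SameAR2.sameRestriction {ω₀ ω₁ : Form2 m} {f : ℝ → Fin m → ℝ}
    {w₀ w₁ : TwoForm (Fin m → ℝ)} (h : SameAR2 m ω₀ ω₁ f) (hf : Tendsto f (𝓝 0) (𝓝 0))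
    (h₀ : ∀ᶠ x in 𝓝 0, ∀ u v, w₀ x u v = ω₀ x u v)
    (h₁ : ∀ᶠ x in 𝓝 0, ∀ u v, w₁ x u v = ω₁ x u v) : SameRestriction (map f (𝓝 0)) w₀ w₁ := by
  obtain ⟨α, β, hα, hβ, hαf, hβf, heq⟩ := h
  obtain ⟨a, ha, haα⟩ := hα.exists_twoForm
  obtain ⟨b, hb, hbβ⟩ := hβ.exists_oneForm
  refine ⟨a, b, ha, hb, ?_, ?_, ?_⟩
  · refine eventually_map.2 ?_
    filter_upwards [hαf, hf.eventually haα] with t ht hat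
    ext u v
    rw [hat, ht]
    rfl
  · refine eventually_map.2 ?_
    filter_upwards [hβf, hf.eventually hbβ] with t ht hbt
    ext u
    rw [hbt, ht]
    rfl
  · filter_upwards [heq, h₀, h₁, haα, eventually_eventually_nhds.2 hbβ] with x hx hx₀ hx₁ hax hbx
    ext u v
    simpa only [Pi.sub_apply, Pi.add_apply, sub_apply, add_apply, hx₀, hx₁, hax,
      extD1_eq_extDerivOne (hb.differentiable (by simp) x) hbx] using hx u v

theorem RelSymplectomorphic.exists_isDiffeoGerm {ω₀ ω₁ : Form2 m} {f : ℝ → Fin m → ℝ}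
    {w₀ w₁ : TwoForm (Fin m → ℝ)} (h : RelSymplectomorphic (map f (𝓝 0)) w₀ w₁)
    (hw₀ : Function.Injective (w₀ 0)) (h₀ : ∀ᶠ x in 𝓝 0, ∀ u v, w₀ x u v = ω₀ x u v)
    (h₁ : ∀ᶠ x in 𝓝 0, ∀ u v, w₁ x u v = ω₁ x u v) :
    ∃ Φ : (Fin m → ℝ) → (Fin m → ℝ), IsDiffeoGerm m Φ ∧ (∀ᶠ t in 𝓝 (0 : ℝ), Φ (f t) = f t) ∧
      ∀ᶠ x in 𝓝 (0 : Fin m → ℝ), ∀ u v, pull2 m Φ ω₁ x u v = ω₀ x u v := by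
  obtain ⟨Φ, hΦ₀, hΦ, hΦf, hpull⟩ := h
  have hinj : Function.Injective (fderiv ℝ Φ 0).toLinearMap :=
    (injective_iff_map_eq_zero _).2 fun u hu ↦ (injective_iff_map_eq_zero _).1 hw₀ u <| by
      replace hu : fderiv ℝ Φ 0 u = 0 := hu
      ext v
      rw [← hpull.self_of_nhds, pullbackTwo_apply, hu, map_zero, zero_apply, zero_apply]
  refine ⟨Φ, ⟨hΦ₀, ⟨_, hΦ, fun x hx ↦ ContDiffAt.contDiffWithinAt hx⟩,
    (LinearEquiv.ofInjectiveEndo _ hinj).toContinuousLinearEquiv, ?_⟩, eventually_map.1 hΦf, ?_⟩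
  · exact (hΦ.self_of_nhds.differentiableAt (by simp)).hasFDerivAt
  · have hΦlim : Tendsto Φ (𝓝 0) (𝓝 0) := by
      simpa only [ContinuousAt, hΦ₀] using hΦ.self_of_nhds.continuousAt
    filter_upwards [hpull, h₀, hΦlim.eventually h₁] with x hx hx₀ hx₁ u v
    rw [pull2, ← hx₁, ← hx₀, ← hx, pullbackTwo_apply]

theorem map_nhds_zero_of_isDiffeoGerm1 {φ : ℝ → ℝ} (h : IsDiffeoGerm1 φ) : map φ (𝓝 0) = 𝓝 0 := by
  obtain ⟨hφ₀, hφ, hφ'⟩ := h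
  have hstrict := (eventually_contDiffAt_of_contDiffOn hφ).self_of_nhds.hasStrictDerivAt (by simp)
  simpa only [hφ₀] using hstrict.map_nhds_eq hφ'

theorem monomialCurve_single {k : ℕ} (hkm : k ≤ m) (μ : Fin k → ℕ) :
    monomialCurve (fun j ↦ Pi.single (Fin.castLE hkm j) (1 : ℝ)) μ =
      fun t (i : Fin m) ↦ if h : (i : ℕ) < k then t ^ μ ⟨i, h⟩ else 0 := by
  ext t i
  simp only [monomialCurve, Finset.sum_apply, Pi.smul_apply, smul_eq_mul, Pi.single_apply]
  split_ifs with h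
  · rw [Finset.sum_eq_single_of_mem ⟨i, h⟩ (Finset.mem_univ _) fun j _ hj ↦ ?_]
    · simp
    · rw [if_neg fun hij ↦ hj (by ext; simp [hij]), mul_zero]
  · refine Finset.sum_eq_zero fun j _ ↦ ?_
    rw [if_neg fun hij ↦ h (by simp [hij]), mul_zero]

theorem IsQuasiHomogeneousCurve.exists_isQuasiHomogeneousGerm {f : ℝ → Fin m → ℝ}
    (h : IsQuasiHomogeneousCurve m f) :
    ∃ (Ψ : (Fin m → ℝ) → (Fin m → ℝ)) (W : Submodule ℝ (Fin m → ℝ)), IsDiffeoGerm m Ψ ∧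
      IsQuasiHomogeneousGerm (map Ψ (map f (𝓝 0))) W := by
  obtain ⟨k, -, hkm, μ, -, hμ, hlin, φ, Ψ, hφ, hΨ, heq⟩ := h
  have hb : LinearIndependent ℝ fun j : Fin k ↦ (Pi.single (Fin.castLE hkm j) 1 : Fin m → ℝ) :=
    (Pi.linearIndependent_single_one (Fin m) ℝ).comp _ (Fin.castLE_injective hkm)
  have hcurve : map Ψ (map f (𝓝 0)) =
      map (monomialCurve (fun j ↦ Pi.single (Fin.castLE hkm j) (1 : ℝ)) μ) (𝓝 0) := by
    conv_rhs => rw [← map_nhds_zero_of_isDiffeoGerm1 hφ]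
    rw [monomialCurve_single, map_map, map_map]
    exact Filter.map_congr heq
  exact ⟨Ψ, _, hΨ, hcurve ▸ isQuasiHomogeneousGerm_monomialCurve hb hμ hlin⟩

end CoordinateForms

/-- Theorem A of Domitrz–Janeczko–Zhitomirskii for quasi-homogeneous curves: two germs
of symplectic forms with the same algebraic restriction to a quasi-homogeneous
curve-germ `f` are interchanged by a germ of diffeomorphism preserving `f`. -/
theorem darboux_givental_quasiHomogeneous
    (n : ℕ) (f : ℝ → (Fin (2*n) → ℝ)) (hf : IsCurveGerm (2*n) f)
    (hq : IsQuasiHomogeneousCurve (2*n) f)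
    (ω₀ ω₁ : Form2 (2*n))
    (h₀ : IsSymplecticGerm (2*n) ω₀) (h₁ : IsSymplecticGerm (2*n) ω₁)
    (hsame : SameAR2 (2*n) ω₀ ω₁ f) :
    ∃ Φ : (Fin (2*n) → ℝ) → (Fin (2*n) → ℝ), IsDiffeoGerm (2*n) Φ ∧
      (∀ᶠ t in 𝓝 (0 : ℝ), Φ (f t) = f t) ∧
      ∀ᶠ x in 𝓝 (0 : Fin (2*n) → ℝ), ∀ u v, pull2 (2*n) Φ ω₁ x u v = ω₀ x u v := by
  obtain ⟨hf₀, hf_smooth⟩ := hf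
  have hf_tendsto : Tendsto f (𝓝 0) (𝓝 0) := by
    simpa only [ContinuousAt, hf₀] using
      (eventually_contDiffAt_of_contDiffOn hf_smooth).self_of_nhds.continuousAt
  obtain ⟨Ψ, W, ⟨hΨ₀, hΨ, Ψ', hΨ'⟩, hΨf⟩ := hq.exists_isQuasiHomogeneousGerm
  obtain ⟨w₀, hw₀, heq₀⟩ := h₀.exists_isSymplecticAtZero
  obtain ⟨w₁, hw₁, heq₁⟩ := h₁.exists_isSymplecticAtZero
  have hrel : RelSymplectomorphic (map f (𝓝 0)) w₀ w₁ :=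
    hΨf.relSymplectomorphic_of_map hf_tendsto (eventually_contDiffAt_of_contDiffOn hΨ) hΨ₀ hΨ'
      hw₀ hw₁ (hsame.sameRestriction hf_tendsto heq₀ heq₁)
  exact hrel.exists_isDiffeoGerm hw₀.injective heq₀ heq₁
end
end

section
/- Let ω0 be the standard symplectic form on ℝ^4 with coordinates ordered (p1,q1,p2,q2), and let c_1, c_2 be real numbers with c_2≠0. Then the curve-germ f(t) = (t^4, t^5+c_1·t^7, t^6, c_2·t^7) has Lagrangian tangency order Lt(f) = 5; that is: (a) for every Lagrangian defining map H = (H_1,H_2):(ℝ^4,0)→(ℝ^2,0), min(ord(H_1∘f), ord(H_2∘f)) ≤ 5, and (b) there exists a Lagrangian defining map H = (H_1,H_2):(ℝ^4,0)→(ℝ^2,0) with min(ord(H_1∘f), ord(H_2∘f)) = 5. -/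
open Filter Topology

noncomputable section

/-- The standard symplectic form on `ℝ^{2n}`, coordinates ordered `(p₁,q₁,…,pₙ,qₙ)`. -/
def omega0 (n : ℕ) (u v : Fin (2*n) → ℝ) : ℝ :=
  ∑ i : Fin n,
    (u ⟨2*i.val, by have := i.isLt; omega⟩ * v ⟨2*i.val+1, by have := i.isLt; omega⟩
      - u ⟨2*i.val+1, by have := i.isLt; omega⟩ * v ⟨2*i.val, by have := i.isLt; omega⟩)

/-- A Lagrangian defining map: a smooth map-germ `H : (ℝ^{2n},0) → (ℝ^n,0)` whose
derivative at `0` has rank `n` and such that, near `0`, the kernel of `DH(x)` is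
`ω₀`-isotropic at every point `x` of `H⁻¹(0)`. -/
def IsLagrangianMap (n : ℕ) (H : (Fin (2*n) → ℝ) → (Fin n → ℝ)) : Prop :=
  H 0 = 0 ∧ (∃ U ∈ 𝓝 (0 : Fin (2*n) → ℝ), ContDiffOn ℝ (⊤ : ℕ∞) H U) ∧
  Function.Surjective ⇑(fderiv ℝ H 0) ∧
  ∀ᶠ x in 𝓝 (0 : Fin (2*n) → ℝ), H x = 0 → ∀ u v : Fin (2*n) → ℝ,
    fderiv ℝ H x u = 0 → fderiv ℝ H x v = 0 → omega0 n u v = 0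

/-!
Suppose `f t = t ^ k • v + t ^ l • w + o(t ^ l)` with `k < l < 2 * k` and `ω₀(v, w) ≠ 0`. If a `C²`
map `H` with `H 0 = 0` satisfies `H (f t) = o(t ^ l)`, then so does its linear part, because the
quadratic remainder is `O(t ^ (2 * k))`; hence `DH(0)` kills both `v` and `w`, which is impossible
when its kernel is isotropic. Conversely, identify `ℝ^{2n}` with `ℂⁿ`, so that `ω₀` is the imaginary
part of the Hermitian product, and choose an orthonormal basis in which `v` has real coordinates.
The imaginary parts of the coordinates form a linear Lagrangian defining map which kills `v` but not
`w`.
-/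

open Asymptotics

section Taylor

variable {E F : Type*} [NormedAddCommGroup E] [NormedSpace ℝ E]
  [NormedAddCommGroup F] [NormedSpace ℝ F]

lemma isLittleO_sub_pow_sub_pow {𝕜 : Type*} [NormedDivisionRing 𝕜] (x₀ : 𝕜) {m n : ℕ}
    (hmn : m < n) :
    (fun x ↦ (x - x₀) ^ n) =o[𝓝 x₀] fun x ↦ (x - x₀) ^ m := by
  simpa only [← norm_pow, isLittleO_norm_norm] using isLittleO_pow_sub_pow_sub x₀ hmn

lemma eq_zero_of_sub_pow_smul_isLittleO {𝕜 V : Type*} [NontriviallyNormedField 𝕜]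
    [NormedAddCommGroup V] [NormedSpace 𝕜 V] {x₀ : 𝕜} {c : V} {n : ℕ}
    (h : (fun x ↦ (x - x₀) ^ n • c) =o[𝓝 x₀] fun x ↦ (x - x₀) ^ n) : c = 0 := by
  have h_ne : ∀ᶠ x in 𝓝[≠] x₀, (x - x₀) ^ n ≠ 0 :=
    eventually_mem_nhdsWithin.mono fun x hx ↦ pow_ne_zero n (sub_ne_zero.2 hx)
  have h_const : (fun _ ↦ c) =o[𝓝[≠] x₀] fun _ ↦ (1 : 𝕜) := by
    refine ((isBigO_refl (fun x ↦ ((x - x₀) ^ n)⁻¹) _).smul_isLittleO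
      (h.mono nhdsWithin_le_nhds)).congr' ?_ ?_
    · filter_upwards [h_ne] with x hx using inv_smul_smul₀ hx c
    · filter_upwards [h_ne] with x hx using inv_mul_cancel₀ hx
  exact isLittleO_const_const_iff.1 h_const

lemma taylor_isLittleO_of_contDiffAt {g : ℝ → E} {x₀ : ℝ} {n : ℕ} (hg : ContDiffAt ℝ n g x₀) :
    (fun x ↦ g x - ∑ k ∈ Finset.range (n + 1),
      ((k.factorial : ℝ)⁻¹ * (x - x₀) ^ k) • iteratedDeriv k g x₀) =o[𝓝 x₀]
      fun x ↦ (x - x₀) ^ n := by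
  obtain ⟨u, hu, hgu⟩ := hg.contDiffOn le_rfl (by simp)
  obtain ⟨ε, hε, hεu⟩ := Metric.mem_nhds_iff.1 hu
  have hx₀ : x₀ ∈ Metric.ball x₀ ε := Metric.mem_ball_self hε
  simpa only [taylor_within_apply, iteratedDerivWithin_of_isOpen Metric.isOpen_ball hx₀,
    Metric.isOpen_ball.nhdsWithin_eq hx₀]
    using taylor_isLittleO (convex_ball x₀ ε) hx₀ (hgu.mono hεu)

lemma isLittleO_sub_pow_iff_iteratedDeriv_eq_zero {g : ℝ → E} {x₀ : ℝ} {n : ℕ}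
    (hg : ContDiffAt ℝ n g x₀) :
    g =o[𝓝 x₀] (fun x ↦ (x - x₀) ^ n) ↔ ∀ m ≤ n, iteratedDeriv m g x₀ = 0 := by
  refine ⟨fun h ↦ ?_, fun h ↦ ?_⟩
  · induction n using Nat.strong_induction_on with
    | _ n ih =>
      have h_lt : ∀ m < n, iteratedDeriv m g x₀ = 0 := fun m hm ↦
        ih m hm (hg.of_le (mod_cast hm.le)) (h.trans (isLittleO_sub_pow_sub_pow x₀ hm)) m le_rfl
      have h_top : (fun x ↦ (x - x₀) ^ n • (n.factorial : ℝ)⁻¹ • iteratedDeriv n g x₀) =o[𝓝 x₀]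
          fun x ↦ (x - x₀) ^ n := by
        refine (h.sub (taylor_isLittleO_of_contDiffAt hg)).congr_left fun x ↦ ?_
        rw [Finset.sum_range_succ, Finset.sum_eq_zero fun m hm ↦ by
          rw [h_lt m (Finset.mem_range.1 hm), smul_zero], zero_add, sub_sub_cancel, mul_comm,
          mul_smul]
      have h_eq : iteratedDeriv n g x₀ = 0 :=
        (smul_eq_zero.1 (eq_zero_of_sub_pow_smul_isLittleO h_top)).resolve_left
          (inv_ne_zero (mod_cast n.factorial_ne_zero))
      exact fun m hm ↦ hm.lt_or_eq.elim (h_lt m) (· ▸ h_eq)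
  · refine (taylor_isLittleO_of_contDiffAt hg).congr_left fun x ↦ ?_
    rw [Finset.sum_eq_zero fun m hm ↦ by
      rw [h m (Finset.mem_range_succ_iff.1 hm), smul_zero], sub_zero]

lemma iteratedDeriv_eq_of_sub_isLittleO {g h : ℝ → E} {x₀ : ℝ} {n : ℕ}
    (hg : ContDiffAt ℝ n g x₀) (hh : ContDiffAt ℝ n h x₀)
    (hgh : (fun x ↦ g x - h x) =o[𝓝 x₀] fun x ↦ (x - x₀) ^ n) {m : ℕ} (hm : m ≤ n) :
    iteratedDeriv m g x₀ = iteratedDeriv m h x₀ := by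
  have hm' : (m : WithTop ℕ∞) ≤ n := mod_cast hm
  rw [← sub_eq_zero, ← iteratedDeriv_fun_sub (hg.of_le hm') (hh.of_le hm')]
  exact (isLittleO_sub_pow_iff_iteratedDeriv_eq_zero (hg.sub hh)).1 hgh m hm

lemma sub_fderiv_isBigO_norm_sub_sq {G : E → F} {x₀ : E} (hG : ContDiffAt ℝ 2 G x₀) :
    (fun x ↦ G x - G x₀ - fderiv ℝ G x₀ (x - x₀)) =O[𝓝 x₀] fun x ↦ ‖x - x₀‖ ^ 2 := by
  have h_fderiv : (fun x ↦ fderiv ℝ G x - fderiv ℝ G x₀) =O[𝓝 x₀] fun x ↦ x - x₀ :=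
    ((hG.fderiv_right (m := 1) (by norm_num)).differentiableAt one_ne_zero).isBigO_sub
  obtain ⟨C, hC_nonneg, hC⟩ := h_fderiv.exists_nonneg
  have h_diff : ∀ᶠ x in 𝓝 x₀, DifferentiableAt ℝ G x :=
    (hG.eventually (by simp)).mono fun x hx ↦ hx.differentiableAt two_ne_zero
  obtain ⟨ε, hε, h_ball⟩ := Metric.eventually_nhds_iff_ball.1 (hC.bound.and h_diff)
  refine .of_bound C ?_
  filter_upwards [Metric.ball_mem_nhds x₀ hε] with x hx
  have h_segment : segment ℝ x₀ x ⊆ Metric.ball x₀ ε :=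
    (convex_ball x₀ ε).segment_subset (Metric.mem_ball_self hε) hx
  have h_bound : ∀ y ∈ segment ℝ x₀ x, ‖fderiv ℝ G y - fderiv ℝ G x₀‖ ≤ C * ‖x - x₀‖ := fun y hy ↦
    (h_ball y (h_segment hy)).1.trans <|
      mul_le_mul_of_nonneg_left (norm_sub_le_of_mem_segment hy) hC_nonneg
  calc ‖G x - G x₀ - fderiv ℝ G x₀ (x - x₀)‖
      ≤ C * ‖x - x₀‖ * ‖x - x₀‖ :=
        (convex_segment x₀ x).norm_image_sub_le_of_norm_fderiv_le'
          (fun y hy ↦ (h_ball y (h_segment hy)).2) h_bound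
          (left_mem_segment ℝ x₀ x) (right_mem_segment ℝ x₀ x)
    _ = C * ‖‖x - x₀‖ ^ 2‖ := by rw [norm_pow, norm_norm, sq, mul_assoc]

end Taylor

section CurveExpansion

variable {E F : Type*} [NormedAddCommGroup E] [NormedSpace ℝ E]
  [NormedAddCommGroup F] [NormedSpace ℝ F] {f : ℝ → E} {v w : E} {k l : ℕ}

lemma isBigO_pow_of_sub_isLittleO (hkl : k < l)
    (hf : (fun t ↦ f t - (t ^ k • v + t ^ l • w)) =o[𝓝 0] fun t : ℝ ↦ t ^ l) :
    f =O[𝓝 0] fun t : ℝ ↦ t ^ k := by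
  have h_pow : (fun t : ℝ ↦ t ^ l) =o[𝓝 0] fun t ↦ t ^ k := isLittleO_pow_pow hkl
  have h_smul (m : ℕ) (u : E) : (fun t : ℝ ↦ t ^ m • u) =O[𝓝 0] fun t : ℝ ↦ t ^ m := by
    simpa using (isBigO_refl (fun t : ℝ ↦ t ^ m) _).smul (isBigO_const_one ℝ u (𝓝 0))
  have h_main : (fun t : ℝ ↦ t ^ k • v + t ^ l • w) =O[𝓝 0] fun t : ℝ ↦ t ^ k :=
    (h_smul k v).add ((h_smul l w).trans h_pow.isBigO)
  exact ((hf.trans h_pow).isBigO.add h_main).congr_left fun t ↦ sub_add_cancel _ _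

lemma apply_zero_of_sub_isLittleO (hk : k ≠ 0) (hkl : k < l)
    (hf : (fun t ↦ f t - (t ^ k • v + t ^ l • w)) =o[𝓝 0] fun t : ℝ ↦ t ^ l) : f 0 = 0 :=
  (isBigO_pow_of_sub_isLittleO hkl hf).eq_zero_imp.self_of_nhds (zero_pow hk)

lemma fderiv_apply_eq_zero_of_comp_isLittleO {G : E → F} (hG : ContDiffAt ℝ 2 G 0) (hG₀ : G 0 = 0)
    (hkl : k < l) (hlk : l < 2 * k)
    (hf : (fun t ↦ f t - (t ^ k • v + t ^ l • w)) =o[𝓝 0] fun t : ℝ ↦ t ^ l)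
    (hGf : (fun t ↦ G (f t)) =o[𝓝 0] fun t : ℝ ↦ t ^ l) :
    fderiv ℝ G 0 v = 0 ∧ fderiv ℝ G 0 w = 0 := by
  set L := fderiv ℝ G 0
  have hf_isBigO := isBigO_pow_of_sub_isLittleO hkl hf
  have hf_tendsto : Tendsto f (𝓝 0) (𝓝 0) :=
    hf_isBigO.trans_tendsto <| by
      simpa [show k ≠ 0 by omega] using (continuous_pow k).tendsto (0 : ℝ)
  have h_remainder : (fun t ↦ G (f t) - L (f t)) =o[𝓝 0] fun t : ℝ ↦ t ^ l := by
    have h_sq : (fun x ↦ G x - L x) =O[𝓝 0] fun x ↦ ‖x‖ ^ 2 := by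
      simpa only [hG₀, sub_zero] using sub_fderiv_isBigO_norm_sub_sq hG
    refine (h_sq.comp_tendsto hf_tendsto).trans_isLittleO <|
      (hf_isBigO.norm_left.pow 2).trans_isLittleO ?_
    simpa only [← pow_mul, mul_comm k] using isLittleO_pow_pow hlk
  have h_linear : (fun t ↦ t ^ k • L v + t ^ l • L w) =o[𝓝 0] fun t : ℝ ↦ t ^ l := by
    have h_image := (L.isBigO_comp _ _).trans_isLittleO hf
    refine ((hGf.sub h_remainder).sub h_image).congr_left fun t ↦ ?_
    simp only [map_sub, map_add, map_smul]
    abel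
  have hLv : L v = 0 := by
    have h_pow : (fun t : ℝ ↦ t ^ l) =o[𝓝 0] fun t ↦ t ^ k := isLittleO_pow_pow hkl
    have h_smul : (fun t : ℝ ↦ t ^ l • L w) =o[𝓝 0] fun t ↦ t ^ k := by
      simpa using h_pow.smul_isBigO (isBigO_const_one ℝ (L w) (𝓝 0))
    refine eq_zero_of_sub_pow_smul_isLittleO (x₀ := (0 : ℝ)) (n := k) ?_
    simpa using (h_linear.trans h_pow).sub h_smul
  refine ⟨hLv, eq_zero_of_sub_pow_smul_isLittleO (x₀ := (0 : ℝ)) (n := l) ?_⟩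
  simpa [hLv] using h_linear

lemma iteratedDeriv_eq_ite_of_sub_isLittleO {g : ℝ → E} {c : E} {n m : ℕ} (hg : ContDiffAt ℝ n g 0)
    (hgc : (fun t ↦ g t - t ^ n • c) =o[𝓝 0] fun t : ℝ ↦ t ^ n) (hm : m ≤ n) :
    iteratedDeriv m g 0 = if m = n then (n.factorial : ℝ) • c else 0 := by
  rw [iteratedDeriv_eq_of_sub_isLittleO (h := fun t ↦ t ^ n • c) hg (by fun_prop)
    (by simpa using hgc) hm, iteratedDeriv_smul_const (by fun_prop), iteratedDeriv_fun_pow_zero]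
  split_ifs <;> simp

lemma iteratedDeriv_clm_comp_eq_ite {A : E →L[ℝ] F} (hA : A v = 0) (hf : ContDiffAt ℝ l f 0)
    (hfvw : (fun t ↦ f t - (t ^ k • v + t ^ l • w)) =o[𝓝 0] fun t : ℝ ↦ t ^ l)
    {m : ℕ} (hm : m ≤ l) :
    iteratedDeriv m (fun t ↦ A (f t)) 0 = if m = l then (l.factorial : ℝ) • A w else 0 := by
  have hAf : (fun t ↦ A (f t) - t ^ l • A w) =o[𝓝 0] fun t : ℝ ↦ t ^ l := by
    simpa [hA] using (A.isBigO_comp _ _).trans_isLittleO hfvw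
  exact iteratedDeriv_eq_ite_of_sub_isLittleO (A.contDiff.contDiffAt.comp 0 hf) hAf hm

end CurveExpansion

section LagrangianMaps

variable {n : ℕ}

/-- The identification of `ℝ^{2n}` with `ℂⁿ` by the complex coordinates `pᵢ + √-1 qᵢ`. It turns the
standard symplectic form into the imaginary part of the Hermitian product. -/
def complexCoords (n : ℕ) : (Fin (2 * n) → ℝ) →ₗ[ℝ] EuclideanSpace ℂ (Fin n) where
  toFun x := WithLp.toLp 2 fun i ↦ ⟨x ⟨2 * i, by omega⟩, x ⟨2 * i + 1, by omega⟩⟩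
  map_add' x y := by ext i; apply Complex.ext <;> simp
  map_smul' c x := by ext i; apply Complex.ext <;> simp

lemma complexCoords_surjective (n : ℕ) : Function.Surjective (complexCoords n) := by
  intro z
  refine ⟨fun j ↦ if j.val % 2 = 0 then (z ⟨j / 2, by omega⟩).re else (z ⟨j / 2, by omega⟩).im, ?_⟩
  ext i
  apply Complex.ext <;> simp [complexCoords, Nat.mul_add_div]

lemma omega0_eq_im_inner (u v : Fin (2 * n) → ℝ) :
    omega0 n u v = (inner ℂ (complexCoords n u) (complexCoords n v)).im := by
  simp only [omega0, PiLp.inner_apply, Complex.im_sum]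
  refine Finset.sum_congr rfl fun i _ ↦ ?_
  simp only [complexCoords, LinearMap.coe_mk, AddHom.coe_mk, RCLike.inner_apply, Complex.mul_im,
    Complex.conj_im, mul_neg, Complex.conj_re]
  ring

lemma exists_orthonormalBasis_repr_im_eq_zero {ι E : Type*} [Fintype ι] [NormedAddCommGroup E]
    [InnerProductSpace ℂ E] [FiniteDimensional ℂ E]
    (hι : Module.finrank ℂ E = Fintype.card ι) (z : E) :
    ∃ b : OrthonormalBasis ι ℂ E, ∀ i, (b.repr z i).im = 0 := by
  classical
  rcases eq_or_ne z 0 with rfl | hz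
  · exact ⟨(stdOrthonormalBasis ℂ E).reindex (Fintype.equivFinOfCardEq hι.symm).symm, by simp⟩
  have : Nontrivial E := nontrivial_of_ne z 0 hz
  obtain ⟨i₀⟩ : Nonempty ι := Fintype.card_pos_iff.1 (hι ▸ Module.finrank_pos)
  have he : Orthonormal ℂ (({i₀} : Set ι).domRestrict fun _ ↦ (‖z‖ : ℂ)⁻¹ • z) :=
    ⟨fun _ ↦ norm_smul_inv_norm hz, Subsingleton.pairwise⟩
  obtain ⟨b, hb⟩ := he.exists_orthonormalBasis_extension_of_card_eq hι
  refine ⟨b, fun i ↦ ?_⟩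
  have hz_eq : z = (‖z‖ : ℂ) • b i₀ := by
    rw [hb i₀ rfl, smul_inv_smul₀ (by simpa using hz)]
  rw [hz_eq, map_smul, b.repr_self]
  by_cases hi : i = i₀ <;> simp [hi]

lemma exists_clm_surjective_isotropic_ker (v : Fin (2 * n) → ℝ) :
    ∃ A : (Fin (2 * n) → ℝ) →L[ℝ] (Fin n → ℝ), Function.Surjective A ∧ A v = 0 ∧
      ∀ x y, A x = 0 → A y = 0 → omega0 n x y = 0 := by
  obtain ⟨b, hb⟩ := exists_orthonormalBasis_repr_im_eq_zero (ι := Fin n) (by simp)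
    (complexCoords n v)
  let A : (Fin (2 * n) → ℝ) →ₗ[ℝ] (Fin n → ℝ) :=
    { toFun x i := (b.repr (complexCoords n x) i).im
      map_add' x y := by ext i; simp
      map_smul' c x := by ext i; simp [LinearMapClass.map_smul_of_tower b.repr] }
  refine ⟨A.toContinuousLinearMap, fun y ↦ ?_, funext hb, fun x y hx hy ↦ ?_⟩
  · obtain ⟨x, hx⟩ :=
      complexCoords_surjective n (b.repr.symm (WithLp.toLp 2 fun i ↦ y i * Complex.I))
    exact ⟨x, by ext i; simp [A, hx]⟩
  · have hx_im (i : Fin n) : (b.repr (complexCoords n x) i).im = 0 := congrFun hx i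
    have hy_im (i : Fin n) : (b.repr (complexCoords n y) i).im = 0 := congrFun hy i
    rw [omega0_eq_im_inner, ← b.repr.inner_map_map, PiLp.inner_apply, Complex.im_sum]
    exact Finset.sum_eq_zero fun i _ ↦ by simp [hx_im, hy_im]

lemma isLagrangianMap_of_clm {A : (Fin (2 * n) → ℝ) →L[ℝ] (Fin n → ℝ)}
    (hA : Function.Surjective A) (hA_ker : ∀ x y, A x = 0 → A y = 0 → omega0 n x y = 0) :
    IsLagrangianMap n A := by
  refine ⟨map_zero A, ⟨Set.univ, univ_mem, A.contDiff.contDiffOn⟩, ?_, .of_forall fun x _ ↦ ?_⟩ <;>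
    rwa [A.fderiv]

namespace IsLagrangianMap

variable {H : (Fin (2 * n) → ℝ) → (Fin n → ℝ)}

lemma contDiffAt (hH : IsLagrangianMap n H) : ContDiffAt ℝ (⊤ : ℕ∞) H 0 :=
  let ⟨_, hU, hHU⟩ := hH.2.1
  hHU.contDiffAt hU

lemma omega0_eq_zero (hH : IsLagrangianMap n H) {u v : Fin (2 * n) → ℝ}
    (hu : fderiv ℝ H 0 u = 0) (hv : fderiv ℝ H 0 v = 0) : omega0 n u v = 0 :=
  hH.2.2.2.self_of_nhds hH.1 u v hu hv

variable {f : ℝ → (Fin (2 * n) → ℝ)} {v w : Fin (2 * n) → ℝ} {k l : ℕ}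

lemma exists_iteratedDeriv_comp_ne_zero (hH : IsLagrangianMap n H) (hf : ContDiffAt ℝ l f 0)
    (hkl : k < l) (hlk : l < 2 * k)
    (hfvw : (fun t ↦ f t - (t ^ k • v + t ^ l • w)) =o[𝓝 0] fun t : ℝ ↦ t ^ l)
    (hvw : omega0 n v w ≠ 0) :
    ∃ i, ∃ m ≤ l, iteratedDeriv m (fun t ↦ H (f t) i) 0 ≠ 0 := by
  by_contra! h_flat
  have hf₀ : f 0 = 0 := apply_zero_of_sub_isLittleO (by omega) hkl hfvw
  have hHf : ContDiffAt ℝ l (fun t ↦ H (f t)) 0 :=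
    (hf₀ ▸ hH.contDiffAt.of_le (WithTop.coe_le_coe.2 le_top)).comp 0 hf
  have hHf_isLittleO : (fun t ↦ H (f t)) =o[𝓝 0] fun t : ℝ ↦ t ^ l :=
    isLittleO_pi.2 fun i ↦ by
      simpa using (isLittleO_sub_pow_iff_iteratedDeriv_eq_zero (contDiffAt_pi.1 hHf i)).2 (h_flat i)
  obtain ⟨hv, hw⟩ := fderiv_apply_eq_zero_of_comp_isLittleO
    (hH.contDiffAt.of_le (WithTop.coe_le_coe.2 le_top)) hH.1 hkl hlk hfvw hHf_isLittleO
  exact hvw (hH.omega0_eq_zero hv hw)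

end IsLagrangianMap

end LagrangianMaps

theorem lagrangian_tangency_order_row1_4567_general {n k l : ℕ} {f : ℝ → (Fin (2 * n) → ℝ)}
    {v w : Fin (2 * n) → ℝ} (hf : ContDiffAt ℝ l f 0)
    (hkl : k < l) (hlk : l < 2 * k)
    (hfvw : (fun t ↦ f t - (t ^ k • v + t ^ l • w)) =o[𝓝 0] fun t : ℝ ↦ t ^ l)
    (hvw : omega0 n v w ≠ 0) :
    (∀ H : (Fin (2 * n) → ℝ) → (Fin n → ℝ), IsLagrangianMap n H →
      ∃ i, ∃ m ≤ l, iteratedDeriv m (fun t ↦ H (f t) i) 0 ≠ 0) ∧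
    (∃ H : (Fin (2 * n) → ℝ) → (Fin n → ℝ), IsLagrangianMap n H ∧
      (∀ i, ∀ m < l, iteratedDeriv m (fun t ↦ H (f t) i) 0 = 0) ∧
      ∃ i, iteratedDeriv l (fun t ↦ H (f t) i) 0 ≠ 0) := by
  refine ⟨fun H hH ↦ hH.exists_iteratedDeriv_comp_ne_zero hf hkl hlk hfvw hvw, ?_⟩
  obtain ⟨A, hA_surj, hAv, hA_ker⟩ := exists_clm_surjective_isotropic_ker v
  obtain ⟨i, hi⟩ : ∃ i, A w i ≠ 0 :=
    Function.ne_iff.1 fun hAw ↦ hvw (hA_ker v w hAv hAw)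
  have h_deriv (j : Fin n) {m : ℕ} (hm : m ≤ l) :
      iteratedDeriv m (fun t ↦ A (f t) j) 0 = if m = l then (l.factorial : ℝ) • A w j else 0 :=
    iteratedDeriv_clm_comp_eq_ite (A := (ContinuousLinearMap.proj j : (Fin n → ℝ) →L[ℝ] ℝ) ∘L A)
      (congrFun hAv j) hf hfvw hm
  refine ⟨A, isLagrangianMap_of_clm hA_surj hA_ker, fun j m hm ↦ ?_, i, ?_⟩
  · rw [h_deriv j hm.le, if_neg hm.ne]
  · rw [h_deriv i le_rfl, if_pos rfl]
    exact smul_ne_zero (mod_cast l.factorial_ne_zero) hi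

section Curve4567

variable (c₁ c₂ : ℝ)

lemma contDiff_curve4567 {m : WithTop ℕ∞} :
    ContDiff ℝ m fun t : ℝ ↦ (![t^4, t^5 + c₁ * t^7, t^6, c₂ * t^7] : Fin (2 * 2) → ℝ) := by
  refine contDiff_pi.2 fun i ↦ ?_
  fin_cases i <;> dsimp <;> fun_prop

lemma curve4567_sub_isLittleO :
    (fun t : ℝ ↦ (![t^4, t^5 + c₁ * t^7, t^6, c₂ * t^7] : Fin (2 * 2) → ℝ) -
      (t ^ 4 • ![1, 0, 0, 0] + t ^ 5 • ![0, 1, 0, 0])) =o[𝓝 0] fun t : ℝ ↦ t ^ 5 := by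
  have h₆ : (fun t : ℝ ↦ t ^ 6) =o[𝓝 0] fun t ↦ t ^ 5 := isLittleO_pow_pow (by norm_num)
  have h₇ : (fun t : ℝ ↦ t ^ 7) =o[𝓝 0] fun t ↦ t ^ 5 := isLittleO_pow_pow (by norm_num)
  refine isLittleO_pi.2 fun i ↦ ?_
  fin_cases i
  · simp
  · simpa using h₇.const_mul_left c₁
  · simpa using h₆
  · simpa using h₇.const_mul_left c₂

end Curve4567

/-- The curve `f(t) = (t⁴, t⁵+c₁t⁷, t⁶, c₂t⁷)` (`c₂ ≠ 0`) has Lagrangian tangency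
order `5`: (a) for every Lagrangian defining map `H` some component of `H ∘ f`
vanishes at `0` to order at most `5`, and (b) there is a Lagrangian defining map all
of whose components composed with `f` vanish to order at least `5`, one of them to
order exactly `5`. -/
theorem lagrangian_tangency_order_row1_4567 (c₁ c₂ : ℝ) (hc₂ : c₂ ≠ 0) :
    (∀ H : (Fin (2*2) → ℝ) → (Fin 2 → ℝ), IsLagrangianMap 2 H →
      ∃ i : Fin 2, ∃ m ≤ 5,
        iteratedDeriv m (fun t : ℝ => H (![t^4, t^5 + c₁ * t^7, t^6, c₂ * t^7]) i) 0 ≠ 0) ∧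
    (∃ H : (Fin (2*2) → ℝ) → (Fin 2 → ℝ), IsLagrangianMap 2 H ∧
      (∀ i : Fin 2, ∀ m < 5,
        iteratedDeriv m (fun t : ℝ => H (![t^4, t^5 + c₁ * t^7, t^6, c₂ * t^7]) i) 0 = 0) ∧
      ∃ i : Fin 2,
        iteratedDeriv 5 (fun t : ℝ => H (![t^4, t^5 + c₁ * t^7, t^6, c₂ * t^7]) i) 0 ≠ 0) := by
  exact lagrangian_tangency_order_row1_4567_general (contDiff_curve4567 c₁ c₂).contDiffAt
    (by norm_num) (by norm_num) (curve4567_sub_isLittleO c₁ c₂) (by simp [omega0])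
end
end
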